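/- Let d = 1 or d ≥ 3 and s > d/2 an integer. There exists a function 𝒞 such that for all φ ∈ H^{s+1}(ℝᵈ) and all vector fields v ∈ H^{s+1}(ℝᵈ), ‖∇v‖_{H^s} ≤ 𝒞(‖φ‖_{H^{s+1}}) (‖div v‖_{H^s} + ‖curl(e^φ v)‖_{H^s}). -/

import Mathlib

open MeasureTheory SchwartzMap
open scoped FourierTransform Real

noncomputable section

abbrev Euc (d : ℕ) := EuclideanSpace ℝ (Fin d)

/-- Square of the `H^s` norm via the Fourier transform. -/
def hNormSq (d : ℕ) (s : ℝ) (u : Euc d → ℂ) : ℝ :=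
  ∫ ξ : Euc d, (1 + ‖ξ‖ ^ 2) ^ s * ‖𝓕 u ξ‖ ^ 2

def hNorm (d : ℕ) (s : ℝ) (u : Euc d → ℂ) : ℝ := Real.sqrt (hNormSq d s u)

/-- `i`-th partial derivative. -/
def pd (d : ℕ) (i : Fin d) (u : Euc d → ℂ) : Euc d → ℂ :=
  fun x => fderiv ℝ u x (EuclideanSpace.single i 1)

/-- `H^s` norm of the full gradient of a scalar function. -/
def gradHNorm (d : ℕ) (s : ℝ) (u : Euc d → ℂ) : ℝ :=
  Real.sqrt (∑ i, hNormSq d s (pd d i u))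

/-!
By the Hodge identity `‖∇v‖² = ‖div v‖² + ½‖curl v‖²` and `curl v = e^{-φ} curl (e^φ v) - ∇φ ∧ v`,
the gradient of `v` is controlled up to a term of one order less. Here the product estimates only
involve `∇v`, not `v` itself, because `‖ξ‖⁻²` is locally integrable in dimension at least three.
To absorb the remaining term, compare `v` with `u = e^φ v + ∇p`, where `l p - Δp = div (e^φ v - v)`
with a small `l > 0`. The field `u` has the curl of `e^φ v` and almost the divergence of `v`, so
`∇u` is controlled by the right-hand side. On the other hand `e^φ (u - v) = ∇p + (e^φ - 1) u`, where
`∇p` is almost orthogonal to `u - v`, which bounds `u - v` in `L²` by `∇u`. Interpolating between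
this bound and the top order and letting `l → 0` gives the estimate.
-/

open LineDeriv

section Weights

variable {V : Type*} [NormedAddCommGroup V] {m m' : V → ℝ}

/-- The weight such that the `m`-energy of the gradient of `u` is the `gradWeight m`-energy of
`u`. -/
def gradWeight (m : V → ℝ) (ξ : V) : ℝ := (2 * π * ‖ξ‖) ^ 2 * m ξ

lemma gradWeight_mono (h : ∀ ξ, m ξ ≤ m' ξ) (ξ : V) : gradWeight m ξ ≤ gradWeight m' ξ :=
  mul_le_mul_of_nonneg_left (h ξ) (sq_nonneg _)

/-- The Fourier weight of the `H^s` norm. -/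
def sobolevWeight (s : ℝ) (ξ : V) : ℝ := (1 + ‖ξ‖ ^ 2) ^ s

lemma sobolevWeight_pos (s : ℝ) (ξ : V) : 0 < sobolevWeight s ξ := by
  unfold sobolevWeight
  positivity

lemma sobolevWeight_mono {s t : ℝ} (h : s ≤ t) (ξ : V) : sobolevWeight s ξ ≤ sobolevWeight t ξ :=
  Real.rpow_le_rpow_of_exponent_le (le_add_of_nonneg_right (sq_nonneg _)) h

lemma sobolevWeight_add_one (s : ℝ) (ξ : V) :
    sobolevWeight (s + 1) ξ = (1 + ‖ξ‖ ^ 2) * sobolevWeight s ξ := by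
  rw [sobolevWeight, Real.rpow_add_one (by positivity), mul_comm, sobolevWeight]

lemma gradWeight_sobolevWeight_le (s : ℝ) (ξ : V) :
    gradWeight (sobolevWeight s) ξ ≤ (2 * π) ^ 2 * sobolevWeight (s + 1) ξ := by
  rw [sobolevWeight_add_one, gradWeight, mul_pow, mul_assoc]
  have := (sobolevWeight_pos s ξ).le
  gcongr
  exact le_add_of_nonneg_left zero_le_one

/-- Frequencies with `‖ξ‖² ≥ 1/δ` are controlled by the gradient, the others by the `L²` norm. -/
lemma sobolevWeight_le_interpolation {s δ : ℝ} (hs : 0 ≤ s) (hδ : 0 < δ) (ξ : V) :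
    sobolevWeight s ξ ≤ δ * gradWeight (sobolevWeight s) ξ
      + (1 + 1 / δ) ^ s * sobolevWeight 0 ξ := by
  have hW := sobolevWeight_pos s ξ
  have hsmall : (0 : ℝ) ≤ (1 + 1 / δ) ^ s := by positivity
  have hlarge : 0 ≤ δ * gradWeight (sobolevWeight s) ξ := by unfold gradWeight; positivity
  simp only [sobolevWeight, Real.rpow_zero, mul_one] at hW hlarge ⊢
  rcases le_total (1 / δ) (‖ξ‖ ^ 2) with h | h
  · have hpi : (1 : ℝ) ≤ (2 * π) ^ 2 := one_le_pow₀ (by linarith [Real.pi_gt_three])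
    have hδξ : 1 ≤ δ * ((2 * π) ^ 2 * ‖ξ‖ ^ 2) := by
      rw [div_le_iff₀' hδ] at h
      nlinarith [mul_le_mul_of_nonneg_right hpi (zero_le_one.trans h)]
    calc (1 + ‖ξ‖ ^ 2) ^ s ≤ δ * ((2 * π) ^ 2 * ‖ξ‖ ^ 2) * (1 + ‖ξ‖ ^ 2) ^ s :=
          le_mul_of_one_le_left hW.le hδξ
      _ = δ * gradWeight (sobolevWeight s) ξ := by rw [gradWeight, sobolevWeight]; ring
      _ ≤ _ := le_add_of_nonneg_right hsmall
  · exact (Real.rpow_le_rpow (by positivity) (by linarith) hs).trans (le_add_of_nonneg_left hlarge)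

variable [InnerProductSpace ℝ V]

/-- Weights `m` for which the energy `∫ m |û|²` of a Schwartz function is finite and
nonnegative. -/
structure IsTemperateWeight (m : V → ℝ) : Prop where
  hasTemperateGrowth : m.HasTemperateGrowth
  nonneg : ∀ ξ, 0 ≤ m ξ

lemma IsTemperateWeight.continuous (hm : IsTemperateWeight m) : Continuous m :=
  hm.hasTemperateGrowth.1.continuous

lemma IsTemperateWeight.const_mul (hm : IsTemperateWeight m) {c : ℝ} (hc : 0 ≤ c) :
    IsTemperateWeight fun ξ => c * m ξ :=
  ⟨(Function.HasTemperateGrowth.const c).mul hm.hasTemperateGrowth,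
    fun ξ => mul_nonneg hc (hm.nonneg ξ)⟩

lemma IsTemperateWeight.add (hm : IsTemperateWeight m) (hm' : IsTemperateWeight m') :
    IsTemperateWeight fun ξ => m ξ + m' ξ :=
  ⟨hm.hasTemperateGrowth.add hm'.hasTemperateGrowth,
    fun ξ => add_nonneg (hm.nonneg ξ) (hm'.nonneg ξ)⟩

lemma IsTemperateWeight.gradWeight (hm : IsTemperateWeight m) :
    IsTemperateWeight (gradWeight m) := by
  refine ⟨?_, fun ξ => mul_nonneg (sq_nonneg _) (hm.nonneg ξ)⟩
  have h : _root_.gradWeight m = (fun ξ => (2 * π) ^ 2 * ‖ξ‖ ^ 2) * m := by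
    ext ξ
    simp only [_root_.gradWeight, Pi.mul_apply, mul_pow]
  rw [h]
  exact ((Function.HasTemperateGrowth.const _).mul (Function.hasTemperateGrowth_norm_sq V)).mul
    hm.hasTemperateGrowth

lemma isTemperateWeight_sobolevWeight (s : ℝ) :
    IsTemperateWeight (sobolevWeight s : V → ℝ) :=
  ⟨Function.hasTemperateGrowth_one_add_norm_sq_rpow V s, fun ξ => (sobolevWeight_pos s ξ).le⟩

end Weights

lemma sq_norm_add_le {E : Type*} [SeminormedAddGroup E] (a b : E) :
    ‖a + b‖ ^ 2 ≤ 2 * (‖a‖ ^ 2 + ‖b‖ ^ 2) :=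
  (pow_le_pow_left₀ (norm_nonneg _) (norm_add_le a b) 2).trans add_sq_le

section WeightedEnergy

variable {V ι : Type*} [NormedAddCommGroup V] [InnerProductSpace ℝ V] [FiniteDimensional ℝ V]
  [MeasurableSpace V] [BorelSpace V] [Fintype ι] {m m' : V → ℝ}

/-- The energy `∫ m |û|²`: for `m = sobolevWeight s` it is the square of the `H^s` norm. -/
def weightedEnergy (m : V → ℝ) (u : 𝓢(V, ℂ)) : ℝ := ∫ ξ, m ξ * ‖𝓕 u ξ‖ ^ 2

/-- The energy of a vector field given by its components; matrix fields such as the curl are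
indexed by pairs. -/
def totalEnergy (m : V → ℝ) (v : ι → 𝓢(V, ℂ)) : ℝ := ∑ j, weightedEnergy m (v j)

lemma IsTemperateWeight.integrable_mul_norm_sq (hm : IsTemperateWeight m) (f : 𝓢(V, ℂ)) :
    Integrable fun ξ => m ξ * ‖f ξ‖ ^ 2 := by
  refine (((smulLeftCLM ℂ m f).memLp 2).norm.integrable_mul (f.memLp 2).norm).congr
    (.of_forall fun ξ => ?_)
  simp only [Pi.mul_apply, smulLeftCLM_apply_apply hm.hasTemperateGrowth, norm_smul,
    Real.norm_of_nonneg (hm.nonneg ξ)]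
  ring

lemma weightedEnergy_nonneg (hm : IsTemperateWeight m) (u : 𝓢(V, ℂ)) : 0 ≤ weightedEnergy m u :=
  integral_nonneg fun ξ => mul_nonneg (hm.nonneg ξ) (sq_nonneg _)

lemma weightedEnergy_le_of_forall_le (hm : IsTemperateWeight m) (hm' : IsTemperateWeight m')
    {u v : 𝓢(V, ℂ)} (h : ∀ ξ, m ξ * ‖𝓕 u ξ‖ ^ 2 ≤ m' ξ * ‖𝓕 v ξ‖ ^ 2) :
    weightedEnergy m u ≤ weightedEnergy m' v :=
  integral_mono (hm.integrable_mul_norm_sq _) (hm'.integrable_mul_norm_sq _) h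

lemma weightedEnergy_mono (hm : IsTemperateWeight m) (hm' : IsTemperateWeight m')
    (h : ∀ ξ, m ξ ≤ m' ξ) (u : 𝓢(V, ℂ)) : weightedEnergy m u ≤ weightedEnergy m' u :=
  weightedEnergy_le_of_forall_le hm hm' fun ξ => mul_le_mul_of_nonneg_right (h ξ) (sq_nonneg _)

lemma weightedEnergy_const_mul (c : ℝ) (m : V → ℝ) (u : 𝓢(V, ℂ)) :
    weightedEnergy (fun ξ => c * m ξ) u = c * weightedEnergy m u := by
  simp only [weightedEnergy, mul_assoc, integral_const_mul]

lemma weightedEnergy_weight_add (hm : IsTemperateWeight m) (hm' : IsTemperateWeight m')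
    (u : 𝓢(V, ℂ)) :
    weightedEnergy (fun ξ => m ξ + m' ξ) u = weightedEnergy m u + weightedEnergy m' u := by
  simp only [weightedEnergy, add_mul]
  exact integral_add (hm.integrable_mul_norm_sq _) (hm'.integrable_mul_norm_sq _)

lemma weightedEnergy_add_le (hm : IsTemperateWeight m) (u v : 𝓢(V, ℂ)) :
    weightedEnergy m (u + v) ≤ 2 * (weightedEnergy m u + weightedEnergy m v) := by
  have hu := hm.integrable_mul_norm_sq (𝓕 u)
  have hv := hm.integrable_mul_norm_sq (𝓕 v)
  rw [weightedEnergy, weightedEnergy, weightedEnergy, ← integral_add hu hv, ← integral_const_mul]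
  refine integral_mono (hm.integrable_mul_norm_sq _) ((hu.add hv).const_mul 2) fun ξ => ?_
  calc m ξ * ‖𝓕 (u + v) ξ‖ ^ 2 ≤ m ξ * (2 * (‖𝓕 u ξ‖ ^ 2 + ‖𝓕 v ξ‖ ^ 2)) := by
        rw [FourierTransform.fourier_add, add_apply]
        exact mul_le_mul_of_nonneg_left (sq_norm_add_le _ _) (hm.nonneg ξ)
    _ = 2 * (m ξ * ‖𝓕 u ξ‖ ^ 2 + m ξ * ‖𝓕 v ξ‖ ^ 2) := by ring

lemma weightedEnergy_neg (m : V → ℝ) (u : 𝓢(V, ℂ)) :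
    weightedEnergy m (-u) = weightedEnergy m u := by
  simp only [weightedEnergy, FourierTransform.fourier_neg, neg_apply, norm_neg]

lemma weightedEnergy_sub_le (hm : IsTemperateWeight m) (u v : 𝓢(V, ℂ)) :
    weightedEnergy m (u - v) ≤ 2 * (weightedEnergy m u + weightedEnergy m v) := by
  simpa only [sub_eq_add_neg, weightedEnergy_neg] using weightedEnergy_add_le hm u (-v)

lemma totalEnergy_nonneg (hm : IsTemperateWeight m) (v : ι → 𝓢(V, ℂ)) : 0 ≤ totalEnergy m v :=
  Finset.sum_nonneg fun j _ => weightedEnergy_nonneg hm (v j)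

lemma totalEnergy_mono (hm : IsTemperateWeight m) (hm' : IsTemperateWeight m')
    (h : ∀ ξ, m ξ ≤ m' ξ) (v : ι → 𝓢(V, ℂ)) : totalEnergy m v ≤ totalEnergy m' v :=
  Finset.sum_le_sum fun j _ => weightedEnergy_mono hm hm' h (v j)

lemma totalEnergy_sub_le (hm : IsTemperateWeight m) (v w : ι → 𝓢(V, ℂ)) :
    totalEnergy m (v - w) ≤ 2 * (totalEnergy m v + totalEnergy m w) := by
  rw [totalEnergy, totalEnergy, totalEnergy, ← Finset.sum_add_distrib, Finset.mul_sum]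
  exact Finset.sum_le_sum fun j _ => weightedEnergy_sub_le hm (v j) (w j)

lemma IsTemperateWeight.integrable_mul_sum_norm_sq (hm : IsTemperateWeight m)
    (f : ι → 𝓢(V, ℂ)) : Integrable fun ξ => m ξ * ∑ j, ‖𝓕 (f j) ξ‖ ^ 2 := by
  simp only [Finset.mul_sum]
  exact integrable_finsetSum _ fun j _ => hm.integrable_mul_norm_sq _

lemma totalEnergy_eq_integral (hm : IsTemperateWeight m) (v : ι → 𝓢(V, ℂ)) :
    totalEnergy m v = ∫ ξ, m ξ * ∑ j, ‖𝓕 (v j) ξ‖ ^ 2 := by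
  simp only [totalEnergy, weightedEnergy, Finset.mul_sum]
  exact (integral_finsetSum _ fun j _ => hm.integrable_mul_norm_sq _).symm

lemma fourier_lineDerivOp_apply (y : V) (u : 𝓢(V, ℂ)) (ξ : V) :
    𝓕 (∂_{y} u) ξ = 2 * π * Complex.I * (inner ℝ ξ y * 𝓕 u ξ) := by
  have hy : (inner ℝ · y : V → ℝ).HasTemperateGrowth := by fun_prop
  rw [fourier_lineDerivOp_eq, smul_apply, smulLeftCLM_apply_apply hy, Complex.real_smul,
    smul_eq_mul]

lemma sq_norm_two_pi_I_mul (z : ℂ) : ‖2 * π * Complex.I * z‖ ^ 2 = (2 * π) ^ 2 * ‖z‖ ^ 2 := by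
  simp only [norm_mul, mul_pow, Complex.norm_I, Complex.norm_ofNat, Complex.norm_real,
    Real.norm_of_nonneg Real.pi_nonneg, mul_one]

lemma totalEnergy_lineDerivOp (hm : IsTemperateWeight m) (b : OrthonormalBasis ι ℝ V)
    (u : 𝓢(V, ℂ)) : totalEnergy m (fun i => ∂_{b i} u) = weightedEnergy (gradWeight m) u := by
  rw [totalEnergy_eq_integral hm, weightedEnergy]
  congr 1 with ξ
  simp only [fourier_lineDerivOp_apply, sq_norm_two_pi_I_mul, norm_mul (inner ℝ ξ _ : ℂ),
    Complex.norm_real, mul_pow _ _ 2, ← Finset.sum_mul, ← Finset.mul_sum, gradWeight,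
    b.sum_sq_norm_inner_left]
  ring

lemma weightedEnergy_gradWeight_sobolevWeight_le (s : ℝ) (u : 𝓢(V, ℂ)) :
    weightedEnergy (gradWeight (sobolevWeight s)) u
      ≤ (2 * π) ^ 2 * weightedEnergy (sobolevWeight (s + 1)) u := by
  rw [← weightedEnergy_const_mul]
  exact weightedEnergy_mono (isTemperateWeight_sobolevWeight s).gradWeight
    ((isTemperateWeight_sobolevWeight _).const_mul (by positivity))
    (gradWeight_sobolevWeight_le s) u

lemma weightedEnergy_sobolevWeight_mono {s t : ℝ} (h : s ≤ t) (u : 𝓢(V, ℂ)) :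
    weightedEnergy (sobolevWeight s) u ≤ weightedEnergy (sobolevWeight t) u :=
  weightedEnergy_mono (isTemperateWeight_sobolevWeight s) (isTemperateWeight_sobolevWeight t)
    (sobolevWeight_mono h) u

lemma weightedEnergy_le_interpolation {s δ : ℝ} (hs : 0 ≤ s) (hδ : 0 < δ) (u : 𝓢(V, ℂ)) :
    weightedEnergy (sobolevWeight s) u
      ≤ δ * weightedEnergy (gradWeight (sobolevWeight s)) u
        + (1 + 1 / δ) ^ s * weightedEnergy (sobolevWeight 0) u := by
  have hgrad := (isTemperateWeight_sobolevWeight (V := V) s).gradWeight.const_mul hδ.le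
  have hzero := (isTemperateWeight_sobolevWeight (V := V) 0).const_mul
    (show 0 ≤ (1 + 1 / δ) ^ s by positivity)
  rw [← weightedEnergy_const_mul, ← weightedEnergy_const_mul,
    ← weightedEnergy_weight_add hgrad hzero]
  exact weightedEnergy_mono (isTemperateWeight_sobolevWeight s) (hgrad.add hzero)
    (sobolevWeight_le_interpolation hs hδ) u

lemma totalEnergy_le_interpolation {s δ : ℝ} (hs : 0 ≤ s) (hδ : 0 < δ) (v : ι → 𝓢(V, ℂ)) :
    totalEnergy (sobolevWeight s) v
      ≤ δ * totalEnergy (gradWeight (sobolevWeight s)) v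
        + (1 + 1 / δ) ^ s * totalEnergy (sobolevWeight 0) v := by
  simp only [totalEnergy, Finset.mul_sum, ← Finset.sum_add_distrib]
  exact Finset.sum_le_sum fun j _ => weightedEnergy_le_interpolation hs hδ (v j)

lemma weightedEnergy_sobolevWeight_zero (u : 𝓢(V, ℂ)) :
    weightedEnergy (sobolevWeight 0) u = ∫ x, ‖u x‖ ^ 2 := by
  simpa only [weightedEnergy, sobolevWeight, Real.rpow_zero, one_mul]
    using SchwartzMap.integral_norm_sq_fourier u

lemma integrable_norm_sq (u : 𝓢(V, ℂ)) : Integrable fun x => ‖u x‖ ^ 2 := by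
  simpa only [sobolevWeight, Real.rpow_zero, one_mul]
    using (isTemperateWeight_sobolevWeight 0).integrable_mul_norm_sq u

lemma weightedEnergy_sobolevWeight_zero_le {u v : 𝓢(V, ℂ)} {c : ℝ} (h : ∀ x, ‖u x‖ ≤ c * ‖v x‖) :
    weightedEnergy (sobolevWeight 0) u ≤ c ^ 2 * weightedEnergy (sobolevWeight 0) v := by
  rw [weightedEnergy_sobolevWeight_zero, weightedEnergy_sobolevWeight_zero, ← integral_const_mul]
  refine integral_mono (integrable_norm_sq u) ((integrable_norm_sq v).const_mul _) fun x => ?_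
  exact (pow_le_pow_left₀ (norm_nonneg _) (h x) 2).trans_eq (mul_pow _ _ _)

end WeightedEnergy

section CauchySchwarz

open ENNReal

lemma sq_lintegral_le_lintegral_inv_mul_lintegral {α : Type*} [MeasurableSpace α] {μ : Measure α}
    {f w : α → ℝ≥0∞} (hf : AEMeasurable f μ) (hw : AEMeasurable w μ) (hw0 : ∀ᵐ x ∂μ, w x ≠ 0)
    (hw_top : ∀ᵐ x ∂μ, w x ≠ ∞) :
    (∫⁻ x, f x ∂μ) ^ 2 ≤ (∫⁻ x, (w x)⁻¹ ∂μ) * ∫⁻ x, w x * f x ^ 2 ∂μ := by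
  have hsqrt (y : ℝ≥0∞) : (y ^ (1 / 2 : ℝ)) ^ 2 = y := by
    rw [← ENNReal.rpow_natCast, ← ENNReal.rpow_mul]
    norm_num
  have hholder := ENNReal.lintegral_mul_le_Lp_mul_Lq μ Real.HolderConjugate.two_two
    (f := fun x => (w x)⁻¹ ^ (1 / 2 : ℝ)) (g := fun x => w x ^ (1 / 2 : ℝ) * f x)
    (hw.inv.pow_const _) ((hw.pow_const _).mul hf)
  simp only [ENNReal.rpow_ofNat, mul_pow, hsqrt] at hholder
  calc (∫⁻ x, f x ∂μ) ^ 2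
      = (∫⁻ x, (w x)⁻¹ ^ (1 / 2 : ℝ) * (w x ^ (1 / 2 : ℝ) * f x) ∂μ) ^ 2 := by
        congr 1
        refine lintegral_congr_ae ?_
        filter_upwards [hw0, hw_top] with x h0 htop
        rw [← mul_assoc, ← ENNReal.mul_rpow_of_nonneg _ _ (by norm_num),
          ENNReal.inv_mul_cancel h0 htop, ENNReal.one_rpow, one_mul]
    _ ≤ _ := pow_le_pow_left' hholder 2
    _ = _ := by rw [mul_pow, hsqrt, hsqrt]

end CauchySchwarz

section SchwartzMul

variable {V : Type*} [NormedAddCommGroup V] [NormedSpace ℝ V]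

/-- The pointwise product of two Schwartz functions. -/
def schwartzMul (a b : 𝓢(V, ℂ)) : 𝓢(V, ℂ) := pairing (ContinuousLinearMap.mul ℂ ℂ) a b

lemma schwartzMul_apply (a b : 𝓢(V, ℂ)) (x : V) : schwartzMul a b x = a x * b x := rfl

end SchwartzMul

section SupAndProduct

variable {V : Type*} [NormedAddCommGroup V] [InnerProductSpace ℝ V] [FiniteDimensional ℝ V]
  [MeasurableSpace V] [BorelSpace V] {m m₁ m₂ : V → ℝ}

lemma ofReal_weightedEnergy (hm : IsTemperateWeight m) (u : 𝓢(V, ℂ)) :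
    ENNReal.ofReal (weightedEnergy m u) = ∫⁻ ξ, ENNReal.ofReal (m ξ) * ‖𝓕 u ξ‖ₑ ^ 2 := by
  rw [weightedEnergy, ofReal_integral_eq_lintegral_ofReal (hm.integrable_mul_norm_sq _)
    (.of_forall fun ξ => mul_nonneg (hm.nonneg ξ) (sq_nonneg _))]
  simp only [ENNReal.ofReal_mul (hm.nonneg _), ENNReal.ofReal_pow (norm_nonneg _), ofReal_norm]

/-- Cauchy–Schwarz applied to the Fourier inversion formula. -/
lemma sq_norm_apply_le_weightedEnergy (hm : IsTemperateWeight m) (hpos : ∀ ξ, 0 < m ξ)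
    (hinv : Integrable fun ξ => (m ξ)⁻¹) (u : 𝓢(V, ℂ)) (x : V) :
    ‖u x‖ ^ 2 ≤ (∫ ξ, (m ξ)⁻¹) * weightedEnergy m u := by
  have hinv0 : 0 ≤ ∫ ξ, (m ξ)⁻¹ := integral_nonneg fun ξ => (inv_pos.2 (hpos ξ)).le
  have hbound : ‖u x‖ₑ ≤ ∫⁻ ξ, ‖𝓕 u ξ‖ₑ := by
    have hinversion : u x = ∫ ξ, Real.fourierChar (inner ℝ ξ x) • 𝓕 u ξ := by
      rw [← Real.fourierInv_eq, ← fourierInv_coe, FourierTransform.fourierInv_fourier_eq]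
    rw [hinversion]
    refine (enorm_integral_le_lintegral_enorm _).trans_eq ?_
    simp only [← ofReal_norm, Circle.norm_smul]
  rw [← ENNReal.ofReal_le_ofReal_iff (mul_nonneg hinv0 (weightedEnergy_nonneg hm u)),
    ENNReal.ofReal_mul hinv0, ENNReal.ofReal_pow (norm_nonneg _), ofReal_norm,
    ofReal_integral_eq_lintegral_ofReal hinv (.of_forall fun ξ => (inv_pos.2 (hpos ξ)).le),
    ofReal_weightedEnergy hm]
  simp only [ENNReal.ofReal_inv_of_pos (hpos _)]
  refine (pow_le_pow_left' hbound 2).trans (sq_lintegral_le_lintegral_inv_mul_lintegral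
    (𝓕 u).continuous.enorm.aemeasurable hm.continuous.measurable.ennreal_ofReal.aemeasurable
    (.of_forall fun ξ => (ENNReal.ofReal_pos.2 (hpos ξ)).ne')
    (.of_forall fun ξ => ENNReal.ofReal_ne_top))

lemma fourierInv_apply_eq_fourier_neg (u : 𝓢(V, ℂ)) (ξ : V) : 𝓕⁻ u ξ = 𝓕 u (-ξ) := by
  rw [fourierInv_coe, Real.fourierInv_eq_fourier_neg, fourier_coe]

lemma fourier_schwartzMul_apply (a b : 𝓢(V, ℂ)) (ξ : V) :
    𝓕 (schwartzMul a b) ξ = ∫ η, 𝓕 a (ξ - η) * 𝓕 b η := by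
  have hconv : 𝓕 (SchwartzMap.convolution (ContinuousLinearMap.mul ℂ ℂ) (𝓕⁻ b : 𝓢(V, ℂ)) (𝓕⁻ a))
      = schwartzMul a b := by
    ext x
    simp [fourier_convolution, schwartzMul_apply, mul_comm]
  calc 𝓕 (schwartzMul a b) ξ = SchwartzMap.convolution (ContinuousLinearMap.mul ℂ ℂ)
        (𝓕⁻ b : 𝓢(V, ℂ)) (𝓕⁻ a) (-ξ) := by
        rw [← hconv, ← neg_neg ξ, ← fourierInv_apply_eq_fourier_neg,
          FourierTransform.fourierInv_fourier_eq, neg_neg]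
    _ = ∫ η, (𝓕⁻ b : 𝓢(V, ℂ)) (-η) * (𝓕⁻ a : 𝓢(V, ℂ)) (-(ξ - η)) := by
        rw [convolution_apply, MeasureTheory.convolution, ← integral_neg_eq_self]
        simp only [ContinuousLinearMap.mul_apply', sub_neg_eq_add, neg_sub, neg_add_eq_sub]
    _ = ∫ η, 𝓕 a (ξ - η) * 𝓕 b η := by
        simp only [fourierInv_apply_eq_fourier_neg, neg_neg, mul_comm]

lemma lintegral_lintegral_convolution_energy (h₁ : IsTemperateWeight m₁)
    (h₂ : IsTemperateWeight m₂) (a b : 𝓢(V, ℂ)) :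
    ∫⁻ ξ, ∫⁻ η, ENNReal.ofReal (m₁ (ξ - η)) * ENNReal.ofReal (m₂ η)
        * (‖𝓕 a (ξ - η)‖ₑ * ‖𝓕 b η‖ₑ) ^ 2
      = ENNReal.ofReal (weightedEnergy m₁ a) * ENNReal.ofReal (weightedEnergy m₂ b) := by
  have hc₁ := h₁.continuous.measurable
  have hc₂ := h₂.continuous.measurable
  have ha := (𝓕 a).continuous.measurable
  have hb := (𝓕 b).continuous.measurable
  have hsplit (ξ η : V) : ENNReal.ofReal (m₁ (ξ - η)) * ENNReal.ofReal (m₂ η)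
        * (‖𝓕 a (ξ - η)‖ₑ * ‖𝓕 b η‖ₑ) ^ 2
      = (ENNReal.ofReal (m₁ (ξ - η)) * ‖𝓕 a (ξ - η)‖ₑ ^ 2)
        * (ENNReal.ofReal (m₂ η) * ‖𝓕 b η‖ₑ ^ 2) := by ring
  simp only [hsplit]
  rw [lintegral_lintegral_swap (by fun_prop)]
  have hinner (η : V) : ∫⁻ ξ, (ENNReal.ofReal (m₁ (ξ - η)) * ‖𝓕 a (ξ - η)‖ₑ ^ 2)
        * (ENNReal.ofReal (m₂ η) * ‖𝓕 b η‖ₑ ^ 2)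
      = ENNReal.ofReal (weightedEnergy m₁ a) * (ENNReal.ofReal (m₂ η) * ‖𝓕 b η‖ₑ ^ 2) := by
    rw [lintegral_mul_const _ (by fun_prop), ofReal_weightedEnergy h₁,
      lintegral_sub_right_eq_self fun ξ => ENNReal.ofReal (m₁ ξ) * ‖𝓕 a ξ‖ₑ ^ 2]
  simp only [hinner]
  rw [lintegral_const_mul _ (by fun_prop), ofReal_weightedEnergy h₂]

/-- Cauchy–Schwarz in the convolution `𝓕 (a b) = 𝓕 a ⋆ 𝓕 b`. -/
lemma sq_enorm_fourier_schwartzMul_le (h₁ : IsTemperateWeight m₁) (h₂ : IsTemperateWeight m₂)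
    (hpos₁ : ∀ ξ, 0 < m₁ ξ) (hpos₂ : ∀ᵐ ξ, 0 < m₂ ξ) (a b : 𝓢(V, ℂ)) (ξ : V) :
    ‖𝓕 (schwartzMul a b) ξ‖ₑ ^ 2
      ≤ (∫⁻ η, (ENNReal.ofReal (m₁ (ξ - η)) * ENNReal.ofReal (m₂ η))⁻¹)
        * ∫⁻ η, ENNReal.ofReal (m₁ (ξ - η)) * ENNReal.ofReal (m₂ η)
          * (‖𝓕 a (ξ - η)‖ₑ * ‖𝓕 b η‖ₑ) ^ 2 := by
  have hc₁ := h₁.continuous.measurable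
  have hc₂ := h₂.continuous.measurable
  have := (𝓕 a).continuous.measurable
  have := (𝓕 b).continuous.measurable
  have hfourier : ‖𝓕 (schwartzMul a b) ξ‖ₑ ≤ ∫⁻ η, ‖𝓕 a (ξ - η)‖ₑ * ‖𝓕 b η‖ₑ := by
    rw [fourier_schwartzMul_apply]
    simpa only [enorm_mul] using enorm_integral_le_lintegral_enorm fun η => 𝓕 a (ξ - η) * 𝓕 b η
  exact (pow_le_pow_left' hfourier 2).trans <| sq_lintegral_le_lintegral_inv_mul_lintegral
    (by fun_prop) (by fun_prop)
    (hpos₂.mono fun η hη => mul_ne_zero (ENNReal.ofReal_pos.2 (hpos₁ _)).ne'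
      (ENNReal.ofReal_pos.2 hη).ne')
    (.of_forall fun η => ENNReal.mul_ne_top ENNReal.ofReal_ne_top ENNReal.ofReal_ne_top)

lemma weightedEnergy_schwartzMul_le (hm : IsTemperateWeight m) (h₁ : IsTemperateWeight m₁)
    (h₂ : IsTemperateWeight m₂) (hpos₁ : ∀ ξ, 0 < m₁ ξ) (hpos₂ : ∀ᵐ ξ, 0 < m₂ ξ) {M : ℝ}
    (hM : 0 ≤ M)
    (hker : ∀ ξ, ∫⁻ η, ENNReal.ofReal (m ξ * (m₁ (ξ - η) * m₂ η)⁻¹) ≤ ENNReal.ofReal M)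
    (a b : 𝓢(V, ℂ)) :
    weightedEnergy m (schwartzMul a b) ≤ M * (weightedEnergy m₁ a * weightedEnergy m₂ b) := by
  have hA := weightedEnergy_nonneg h₁ a
  have hB := weightedEnergy_nonneg h₂ b
  rw [← ENNReal.ofReal_le_ofReal_iff (by positivity), ENNReal.ofReal_mul hM,
    ENNReal.ofReal_mul hA, ofReal_weightedEnergy hm, ← lintegral_lintegral_convolution_energy h₁ h₂,
    ← lintegral_const_mul' _ _ ENNReal.ofReal_ne_top]
  refine lintegral_mono fun ξ => ?_
  have hker_eq : ENNReal.ofReal (m ξ)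
        * ∫⁻ η, (ENNReal.ofReal (m₁ (ξ - η)) * ENNReal.ofReal (m₂ η))⁻¹
      = ∫⁻ η, ENNReal.ofReal (m ξ * (m₁ (ξ - η) * m₂ η)⁻¹) := by
    rw [← lintegral_const_mul' _ _ ENNReal.ofReal_ne_top]
    refine lintegral_congr_ae ?_
    filter_upwards [hpos₂] with η hη
    rw [ENNReal.ofReal_mul (hm.nonneg ξ), ENNReal.ofReal_inv_of_pos (mul_pos (hpos₁ _) hη),
      ENNReal.ofReal_mul (h₁.nonneg _)]
  calc ENNReal.ofReal (m ξ) * ‖𝓕 (schwartzMul a b) ξ‖ₑ ^ 2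
      ≤ ENNReal.ofReal (m ξ)
          * ((∫⁻ η, (ENNReal.ofReal (m₁ (ξ - η)) * ENNReal.ofReal (m₂ η))⁻¹)
            * ∫⁻ η, ENNReal.ofReal (m₁ (ξ - η)) * ENNReal.ofReal (m₂ η)
              * (‖𝓕 a (ξ - η)‖ₑ * ‖𝓕 b η‖ₑ) ^ 2) := by
        gcongr
        exact sq_enorm_fourier_schwartzMul_le h₁ h₂ hpos₁ hpos₂ a b ξ
    _ ≤ _ := by
      rw [← mul_assoc, hker_eq]
      gcongr
      exact hker ξ

end SupAndProduct

section SobolevProduct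

variable {V : Type*} [NormedAddCommGroup V] {s : ℝ}

lemma sobolevWeight_le_four_rpow_mul (hs : 0 ≤ s) (ξ η : V) :
    sobolevWeight s ξ ≤ 4 ^ s * (sobolevWeight s (ξ - η) + sobolevWeight s η) := by
  set a := 1 + ‖ξ - η‖ ^ 2
  set b := 1 + ‖η‖ ^ 2
  have hsq : ‖ξ‖ ^ 2 ≤ 2 * (‖ξ - η‖ ^ 2 + ‖η‖ ^ 2) := by simpa using sq_norm_add_le (ξ - η) η
  have hmax : 1 + ‖ξ‖ ^ 2 ≤ 4 * max a b := by linarith [le_max_left a b, le_max_right a b]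
  have hmax_rpow : max a b ^ s ≤ a ^ s + b ^ s := by
    rcases max_cases a b with ⟨h, -⟩ | ⟨h, -⟩ <;> rw [h]
    · exact le_add_of_nonneg_right (by positivity)
    · exact le_add_of_nonneg_left (by positivity)
  calc sobolevWeight s ξ ≤ (4 * max a b) ^ s := Real.rpow_le_rpow (by positivity) hmax hs
    _ = 4 ^ s * max a b ^ s := Real.mul_rpow (by norm_num) (le_max_of_le_left (by positivity))
    _ ≤ 4 ^ s * (a ^ s + b ^ s) := by gcongr

lemma sobolevWeight_mul_inv_le (hs : 0 ≤ s) (ξ η : V) :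
    sobolevWeight s ξ * (sobolevWeight s (ξ - η) * sobolevWeight s η)⁻¹
      ≤ 4 ^ s * ((sobolevWeight s η)⁻¹ + (sobolevWeight s (ξ - η))⁻¹) := by
  have hξη := sobolevWeight_pos s (ξ - η)
  have hη := sobolevWeight_pos s η
  rw [← div_eq_mul_inv, div_le_iff₀ (mul_pos hξη hη)]
  refine (sobolevWeight_le_four_rpow_mul hs ξ η).trans_eq ?_
  field_simp

lemma one_le_sobolevWeight (hs : 0 ≤ s) (ξ : V) : 1 ≤ sobolevWeight s ξ :=
  Real.one_le_rpow (le_add_of_nonneg_right (sq_nonneg _)) hs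

lemma inv_gradWeight_sobolevWeight_le (s : ℝ) (η : V) :
    (gradWeight (sobolevWeight (s - 1)) η)⁻¹ ≤ (1 + (‖η‖ ^ 2)⁻¹) / 2 * (sobolevWeight s η)⁻¹ := by
  have hs := sobolevWeight_pos s η
  rcases eq_or_ne η 0 with rfl | hη
  · simp only [gradWeight, norm_zero, mul_zero, ne_eq, OfNat.ofNat_ne_zero, not_false_eq_true,
      zero_pow, zero_mul, inv_zero]
    positivity
  have := norm_pos_iff.2 hη
  have hweight : sobolevWeight s η = (1 + ‖η‖ ^ 2) * sobolevWeight (s - 1) η := by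
    simpa using sobolevWeight_add_one (s - 1) η
  have hinv : (gradWeight (sobolevWeight (s - 1)) η)⁻¹
      = (1 + (‖η‖ ^ 2)⁻¹) / (2 * π) ^ 2 * (sobolevWeight s η)⁻¹ := by
    have := sobolevWeight_pos (s - 1) η
    rw [gradWeight, hweight]
    field_simp
    ring
  rw [hinv]
  gcongr
  nlinarith [Real.pi_gt_three]

/-- The gradient weight degenerates at the origin, which leaves a singularity `‖η‖⁻²` there. -/
lemma sobolevWeight_mul_inv_gradWeight_le (hs : 0 ≤ s) (ξ η : V) :
    sobolevWeight s ξ * (sobolevWeight s (ξ - η) * gradWeight (sobolevWeight (s - 1)) η)⁻¹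
      ≤ 4 ^ s * ((sobolevWeight s η)⁻¹ + (sobolevWeight s (ξ - η))⁻¹
        + (Metric.ball 0 1).indicator (fun η => (‖η‖ ^ 2)⁻¹) η) := by
  have hξ := sobolevWeight_pos s ξ
  have hξη := sobolevWeight_pos s (ξ - η)
  have hη := sobolevWeight_pos s η
  set K := (sobolevWeight s η)⁻¹ + (sobolevWeight s (ξ - η))⁻¹
  have hK0 : 0 ≤ K := by positivity
  have hK2 : K ≤ 2 := by
    linarith [inv_le_one_of_one_le₀ (one_le_sobolevWeight hs η),
      inv_le_one_of_one_le₀ (one_le_sobolevWeight hs (ξ - η))]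
  have hN0 : 0 ≤ (‖η‖ ^ 2)⁻¹ := by positivity
  have hsplit : K * ((1 + (‖η‖ ^ 2)⁻¹) / 2)
      ≤ K + (Metric.ball 0 1).indicator (fun η => (‖η‖ ^ 2)⁻¹) η := by
    by_cases hball : η ∈ Metric.ball 0 1
    · rw [Set.indicator_of_mem hball]
      linarith [mul_le_mul_of_nonneg_right hK2 hN0]
    · rw [Set.indicator_of_notMem hball]
      have hN1 : (‖η‖ ^ 2)⁻¹ ≤ 1 := inv_le_one_of_one_le₀ (one_le_pow₀ (by simpa using hball))
      linarith [mul_le_mul_of_nonneg_left hN1 hK0]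
  calc sobolevWeight s ξ * (sobolevWeight s (ξ - η) * gradWeight (sobolevWeight (s - 1)) η)⁻¹
      ≤ sobolevWeight s ξ * ((sobolevWeight s (ξ - η))⁻¹
          * ((1 + (‖η‖ ^ 2)⁻¹) / 2 * (sobolevWeight s η)⁻¹)) := by
        rw [mul_inv]
        gcongr
        exact inv_gradWeight_sobolevWeight_le s η
    _ = sobolevWeight s ξ * (sobolevWeight s (ξ - η) * sobolevWeight s η)⁻¹
          * ((1 + (‖η‖ ^ 2)⁻¹) / 2) := by ring
    _ ≤ 4 ^ s * K * ((1 + (‖η‖ ^ 2)⁻¹) / 2) :=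
        mul_le_mul_of_nonneg_right (sobolevWeight_mul_inv_le hs ξ η) (by positivity)
    _ ≤ _ := by
        rw [mul_assoc]
        gcongr

variable [InnerProductSpace ℝ V] [FiniteDimensional ℝ V] [MeasurableSpace V] [BorelSpace V]

lemma integrable_inv_sobolevWeight (hs : (Module.finrank ℝ V : ℝ) / 2 < s) :
    Integrable fun ξ : V => (sobolevWeight s ξ)⁻¹ := by
  have h := integrable_rpow_neg_one_add_norm_sq (E := V) (μ := volume) (r := 2 * s) (by linarith)
  refine h.congr (.of_forall fun ξ => ?_)
  simp only [sobolevWeight]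
  rw [← Real.rpow_neg (by positivity)]
  congr 1
  ring

lemma integrableOn_ball_inv_norm_sq (hV : 3 ≤ Module.finrank ℝ V) :
    IntegrableOn (fun ξ : V => (‖ξ‖ ^ 2)⁻¹) (Metric.ball 0 1) := by
  have : Nontrivial V := Module.nontrivial_of_finrank_pos (R := ℝ) (by omega)
  rw [integrableOn_fun_norm_addHaar (μ := (volume : Measure V)) (f := fun r : ℝ => (r ^ 2)⁻¹)]
  have hpow : IntegrableOn (fun r : ℝ => r ^ (Module.finrank ℝ V - 3)) (Set.Ioo 0 1) :=
    (continuous_pow _).integrableOn_Icc.mono_set Set.Ioo_subset_Icc_self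
  refine hpow.congr_fun (fun r hr => ?_) measurableSet_Ioo
  have hr0 : r ≠ 0 := hr.1.ne'
  rw [show Module.finrank ℝ V - 1 = Module.finrank ℝ V - 3 + 2 by omega]
  simp only [smul_eq_mul, pow_add]
  field_simp

lemma exists_weightedEnergy_schwartzMul_le {m g : V → ℝ}
    (hs : (Module.finrank ℝ V : ℝ) / 2 < s) (hm : IsTemperateWeight m) (hpos : ∀ᵐ ξ, 0 < m ξ)
    (hg : Integrable g)
    (hker : ∀ ξ η, sobolevWeight s ξ * (sobolevWeight s (ξ - η) * m η)⁻¹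
      ≤ 4 ^ s * ((sobolevWeight s η)⁻¹ + (sobolevWeight s (ξ - η))⁻¹ + g η)) :
    ∃ M, 0 ≤ M ∧ ∀ a b : 𝓢(V, ℂ), weightedEnergy (sobolevWeight s) (schwartzMul a b)
      ≤ M * (weightedEnergy (sobolevWeight s) a * weightedEnergy m b) := by
  have hW := isTemperateWeight_sobolevWeight (V := V) s
  have hinv := integrable_inv_sobolevWeight hs
  let k (ξ η : V) := 4 ^ s * ((sobolevWeight s η)⁻¹ + (sobolevWeight s (ξ - η))⁻¹ + g η)
  have hk_nonneg (ξ η : V) : 0 ≤ k ξ η := (mul_nonneg (hW.nonneg ξ)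
    (inv_nonneg.2 (mul_nonneg (hW.nonneg (ξ - η)) (hm.nonneg η)))).trans (hker ξ η)
  have hinv_add (ξ : V) : Integrable fun η => (sobolevWeight s η)⁻¹ + (sobolevWeight s (ξ - η))⁻¹ :=
    hinv.add (hinv.comp_sub_left ξ)
  have hk (ξ : V) : Integrable (k ξ) := ((hinv_add ξ).add hg).const_mul _
  have hk_const (ξ : V) : ∫ η, k ξ η = ∫ η, k 0 η := by
    have hint (ξ : V) : ∫ η, k ξ η
        = 4 ^ s * (2 * (∫ η : V, (sobolevWeight s η)⁻¹) + ∫ η, g η) := by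
      rw [integral_const_mul, integral_add (hinv_add ξ) hg,
        integral_add hinv (hinv.comp_sub_left ξ),
        integral_sub_left_eq_self fun η => (sobolevWeight s η)⁻¹, two_mul]
    rw [hint, hint]
  have hk0 : 0 ≤ ∫ η, k 0 η := integral_nonneg (hk_nonneg 0)
  refine ⟨∫ η, k 0 η, hk0, weightedEnergy_schwartzMul_le hW hW hm (sobolevWeight_pos s) hpos hk0
    fun ξ => ?_⟩
  rw [← hk_const ξ, ofReal_integral_eq_lintegral_ofReal (hk ξ) (.of_forall (hk_nonneg ξ))]
  exact lintegral_mono fun η => ENNReal.ofReal_le_ofReal (hker ξ η)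

lemma exists_sobolevWeight_schwartzMul_le (hs : (Module.finrank ℝ V : ℝ) / 2 < s) :
    ∃ M, 0 ≤ M ∧ ∀ a b : 𝓢(V, ℂ), weightedEnergy (sobolevWeight s) (schwartzMul a b)
      ≤ M * (weightedEnergy (sobolevWeight s) a * weightedEnergy (sobolevWeight s) b) := by
  have hs0 : 0 ≤ s := (by positivity : (0 : ℝ) ≤ Module.finrank ℝ V / 2).trans hs.le
  refine exists_weightedEnergy_schwartzMul_le (g := 0) hs (isTemperateWeight_sobolevWeight s)
    (.of_forall (sobolevWeight_pos s)) (integrable_zero _ _ _) fun ξ η => ?_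
  simpa only [Pi.zero_apply, add_zero] using sobolevWeight_mul_inv_le hs0 ξ η

/-- `‖η‖⁻²` is integrable near the origin exactly in dimension at least three. -/
lemma exists_gradWeight_schwartzMul_le (hV : 3 ≤ Module.finrank ℝ V)
    (hs : (Module.finrank ℝ V : ℝ) / 2 < s) :
    ∃ M, 0 ≤ M ∧ ∀ a b : 𝓢(V, ℂ), weightedEnergy (sobolevWeight s) (schwartzMul a b)
      ≤ M * (weightedEnergy (sobolevWeight s) a
        * weightedEnergy (gradWeight (sobolevWeight (s - 1))) b) := by
  have : Nontrivial V := Module.nontrivial_of_finrank_pos (R := ℝ) (by omega)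
  have hs0 : 0 ≤ s := (by positivity : (0 : ℝ) ≤ Module.finrank ℝ V / 2).trans hs.le
  refine exists_weightedEnergy_schwartzMul_le hs (isTemperateWeight_sobolevWeight _).gradWeight ?_
    ((integrable_indicator_iff measurableSet_ball).2 (integrableOn_ball_inv_norm_sq hV))
    (sobolevWeight_mul_inv_gradWeight_le hs0)
  filter_upwards [compl_mem_ae_iff.2 (measure_singleton (0 : V))] with ξ hξ
  have := norm_pos_iff.2 hξ
  exact mul_pos (by positivity) (sobolevWeight_pos _ _)

end SobolevProduct

section ExpSubOne

open scoped ContDiff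

variable {V : Type*} [NormedAddCommGroup V] [NormedSpace ℝ V]

/-- Cut `f` off outside a ball containing the range of `φ`. -/
lemma hasTemperateGrowth_comp_schwartzMap {E F : Type*} [NormedAddCommGroup E] [NormedSpace ℝ E]
    [FiniteDimensional ℝ E] [NormedAddCommGroup F] [NormedSpace ℝ F] {f : E → F}
    (hf : ContDiff ℝ ∞ f) (φ : 𝓢(V, E)) : (fun x => f (φ x)).HasTemperateGrowth := by
  set M := SchwartzMap.seminorm ℝ 0 0 φ
  have hM : 0 ≤ M := apply_nonneg _ _
  let χ : ContDiffBump (0 : E) := ⟨M + 1, M + 2, by linarith, by linarith⟩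
  have hcut : (fun z => χ z • f z).HasTemperateGrowth :=
    (χ.hasCompactSupport.smul_right (f' := f)).hasTemperateGrowth (χ.contDiff.smul hf)
  have hχ (x : V) : χ (φ x) = 1 := χ.one_of_mem_closedBall <| mem_closedBall_zero_iff.2 <|
    (norm_le_seminorm ℝ φ x).trans (le_add_of_nonneg_right zero_le_one)
  simpa only [Function.comp_def, hχ, one_smul] using hcut.comp φ.hasTemperateGrowth

lemma norm_exp_sub_one_le_mul_exp {z : ℂ} {B : ℝ} (hz : ‖z‖ ≤ B) :
    ‖Complex.exp z - 1‖ ≤ Real.exp B * ‖z‖ := by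
  have h := Complex.norm_exp_sub_sum_le_norm_mul_exp z 1
  simp only [Finset.sum_range_one, pow_zero, Nat.factorial_zero, Nat.cast_one, div_one,
    pow_one] at h
  calc ‖Complex.exp z - 1‖ ≤ Real.exp ‖z‖ * ‖z‖ := by rwa [mul_comm]
    _ ≤ _ := by gcongr

lemma hasFDerivAt_exp_sub_one (φ : 𝓢(V, ℂ)) (x : V) :
    HasFDerivAt (fun y => Complex.exp (φ y) - 1) (Complex.exp (φ x) • fderiv ℝ φ x) x :=
  (φ.hasFDerivAt x).cexp.sub_const 1

lemma exp_sub_one_decay (φ : 𝓢(V, ℂ)) (k n : ℕ) :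
    ∃ C, ∀ x, ‖x‖ ^ k * ‖iteratedFDeriv ℝ n (fun y => Complex.exp (φ y) - 1) x‖ ≤ C := by
  have hexp := hasTemperateGrowth_comp_schwartzMap Complex.contDiff_exp φ
  cases n with
  | zero =>
    obtain ⟨C, -, hC⟩ := φ.decay k 0
    simp only [norm_iteratedFDeriv_zero] at hC ⊢
    refine ⟨Real.exp (SchwartzMap.seminorm ℝ 0 0 φ) * C, fun x => ?_⟩
    calc ‖x‖ ^ k * ‖Complex.exp (φ x) - 1‖
        ≤ ‖x‖ ^ k * (Real.exp (SchwartzMap.seminorm ℝ 0 0 φ) * ‖φ x‖) := by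
          gcongr
          exact norm_exp_sub_one_le_mul_exp (norm_le_seminorm ℝ φ x)
      _ = Real.exp (SchwartzMap.seminorm ℝ 0 0 φ) * (‖x‖ ^ k * ‖φ x‖) := by ring
      _ ≤ _ := by gcongr; exact hC x
  | succ n =>
    let D : 𝓢(V, V →L[ℝ] ℂ) := smulLeftCLM _ (fun x => Complex.exp (φ x)) (fderivCLM ℝ V ℂ φ)
    have hD : fderiv ℝ (fun y => Complex.exp (φ y) - 1) = D := by
      ext1 x
      rw [(hasFDerivAt_exp_sub_one φ x).fderiv, smulLeftCLM_apply_apply hexp, fderivCLM_apply]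
    obtain ⟨C, -, hC⟩ := D.decay k n
    refine ⟨C, fun x => ?_⟩
    rw [← norm_iteratedFDeriv_fderiv, hD]
    exact hC x

/-- The function `e^φ - 1`, which unlike `e^φ` decays at infinity. -/
def expSubOne (φ : 𝓢(V, ℂ)) : 𝓢(V, ℂ) where
  toFun x := Complex.exp (φ x) - 1
  smooth' := (Complex.contDiff_exp.comp (φ.smooth _)).sub contDiff_const
  decay' := exp_sub_one_decay φ

lemma expSubOne_apply (φ : 𝓢(V, ℂ)) (x : V) : expSubOne φ x = Complex.exp (φ x) - 1 := rfl

/-- The product `e^φ v`. It is written as `v + (e^φ - 1) v` because `e^φ` is not a Schwartz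
function. -/
def expMul (φ v : 𝓢(V, ℂ)) : 𝓢(V, ℂ) := v + schwartzMul (expSubOne φ) v

lemma expMul_apply (φ v : 𝓢(V, ℂ)) (x : V) : expMul φ v x = Complex.exp (φ x) * v x := by
  rw [expMul, add_apply, schwartzMul_apply, expSubOne_apply]
  ring

lemma expMul_neg_expMul (φ v : 𝓢(V, ℂ)) : expMul (-φ) (expMul φ v) = v := by
  ext x
  rw [expMul_apply, expMul_apply, neg_apply, ← mul_assoc, ← Complex.exp_add, neg_add_cancel,
    Complex.exp_zero, one_mul]

lemma lineDerivOp_expSubOne (φ : 𝓢(V, ℂ)) (y : V) :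
    ∂_{y} (expSubOne φ) = expMul φ (∂_{y} φ) := by
  ext x
  have h : HasFDerivAt (expSubOne φ) (Complex.exp (φ x) • fderiv ℝ φ x) x :=
    hasFDerivAt_exp_sub_one φ x
  rw [expMul_apply, lineDerivOp_apply_eq_fderiv, lineDerivOp_apply_eq_fderiv, h.fderiv,
    _root_.smul_apply, smul_eq_mul]

lemma lineDerivOp_schwartzMul (f g : 𝓢(V, ℂ)) (y : V) :
    ∂_{y} (schwartzMul f g) = schwartzMul (∂_{y} f) g + schwartzMul f (∂_{y} g) := by
  ext x
  have h : HasFDerivAt (schwartzMul f g) (f x • fderiv ℝ g x + g x • fderiv ℝ f x) x :=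
    (f.hasFDerivAt x).mul (g.hasFDerivAt x)
  simp only [lineDerivOp_apply_eq_fderiv, h.fderiv, add_apply, schwartzMul_apply,
    _root_.add_apply, _root_.smul_apply, smul_eq_mul]
  ring

lemma lineDerivOp_expMul (φ v : 𝓢(V, ℂ)) (y : V) :
    ∂_{y} (expMul φ v) = expMul φ (∂_{y} v + schwartzMul (∂_{y} φ) v) := by
  ext x
  simp only [expMul, lineDerivOp_add, lineDerivOp_schwartzMul, lineDerivOp_expSubOne, add_apply,
    schwartzMul_apply]
  ring

end ExpSubOne

section ExpSubOneEnergy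

variable {V : Type*} [NormedAddCommGroup V] [InnerProductSpace ℝ V] [FiniteDimensional ℝ V]
  [MeasurableSpace V] [BorelSpace V] {s : ℝ}

lemma exists_norm_apply_le (hs : (Module.finrank ℝ V : ℝ) / 2 < s) (X : ℝ) :
    ∃ B, ∀ u : 𝓢(V, ℂ), weightedEnergy (sobolevWeight s) u ≤ X → ∀ x, ‖u x‖ ≤ B := by
  refine ⟨√((∫ ξ : V, (sobolevWeight s ξ)⁻¹) * X), fun u hu x => Real.le_sqrt_of_sq_le ?_⟩
  refine (sq_norm_apply_le_weightedEnergy (isTemperateWeight_sobolevWeight s)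
    (sobolevWeight_pos s) (integrable_inv_sobolevWeight hs) u x).trans ?_
  gcongr
  exact integral_nonneg fun ξ => (inv_pos.2 (sobolevWeight_pos s ξ)).le

lemma exists_weightedEnergy_expMul_le (hs : (Module.finrank ℝ V : ℝ) / 2 < s) :
    ∃ M, 0 ≤ M ∧ ∀ φ v : 𝓢(V, ℂ), weightedEnergy (sobolevWeight s) (expMul φ v)
      ≤ 2 * (1 + M * weightedEnergy (sobolevWeight s) (expSubOne φ))
        * weightedEnergy (sobolevWeight s) v := by
  obtain ⟨M, hM, hmul⟩ := exists_sobolevWeight_schwartzMul_le hs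
  refine ⟨M, hM, fun φ v => ?_⟩
  refine (weightedEnergy_add_le (isTemperateWeight_sobolevWeight s) _ _).trans ?_
  linarith [hmul (expSubOne φ) v]

lemma exists_gradWeight_expSubOne_le (hs : (Module.finrank ℝ V : ℝ) / 2 < s) :
    ∃ M, 0 ≤ M ∧ ∀ φ : 𝓢(V, ℂ), weightedEnergy (gradWeight (sobolevWeight s)) (expSubOne φ)
      ≤ 2 * (1 + M * weightedEnergy (sobolevWeight s) (expSubOne φ))
        * weightedEnergy (gradWeight (sobolevWeight s)) φ := by
  obtain ⟨M, hM, hexp⟩ := exists_weightedEnergy_expMul_le hs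
  have hW := isTemperateWeight_sobolevWeight (V := V) s
  refine ⟨M, hM, fun φ => ?_⟩
  simp only [← totalEnergy_lineDerivOp hW (stdOrthonormalBasis ℝ V), totalEnergy, Finset.mul_sum,
    lineDerivOp_expSubOne]
  exact Finset.sum_le_sum fun i _ => hexp φ _

/-- By interpolation the term `‖e^φ - 1‖_{H^s}` on the right of the gradient estimate is absorbed
at the cost of an `L²` norm. -/
lemma exists_weightedEnergy_expSubOne_le (hs : (Module.finrank ℝ V : ℝ) / 2 < s) {X : ℝ}
    (hX : 0 ≤ X) :
    ∃ c, 0 ≤ c ∧ ∀ φ : 𝓢(V, ℂ), weightedEnergy (sobolevWeight (s + 1)) φ ≤ X →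
      weightedEnergy (sobolevWeight s) (expSubOne φ) ≤ c := by
  obtain ⟨B, hB⟩ := exists_norm_apply_le hs X
  obtain ⟨M, hM, hgrad⟩ := exists_gradWeight_expSubOne_le hs
  have hs0 : 0 ≤ s := (by positivity : (0 : ℝ) ≤ Module.finrank ℝ V / 2).trans hs.le
  have hW := isTemperateWeight_sobolevWeight (V := V) s
  set Y := (2 * π) ^ 2 * X
  have : 0 ≤ Y := by positivity
  set δ := 1 / (4 * (M * Y + 1))
  have hδ : 0 < δ := by positivity
  have hδY : δ * (4 * (M * Y)) ≤ 1 := by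
    rw [div_mul_eq_mul_div, div_le_one (by positivity)]
    linarith
  refine ⟨2 * (δ * (2 * Y) + (1 + 1 / δ) ^ s * (Real.exp B ^ 2 * X)), by positivity,
    fun φ hφ => ?_⟩
  have hφs := (weightedEnergy_sobolevWeight_mono (by linarith : s ≤ s + 1) φ).trans hφ
  set h := weightedEnergy (sobolevWeight s) (expSubOne φ)
  have hh : 0 ≤ h := weightedEnergy_nonneg hW _
  have hzero : weightedEnergy (sobolevWeight 0) (expSubOne φ) ≤ Real.exp B ^ 2 * X :=
    (weightedEnergy_sobolevWeight_zero_le fun x => norm_exp_sub_one_le_mul_exp (hB φ hφs x)).trans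
      (by gcongr; exact (weightedEnergy_sobolevWeight_mono hs0 φ).trans hφs)
  have hG : weightedEnergy (gradWeight (sobolevWeight s)) (expSubOne φ) ≤ 2 * (1 + M * h) * Y := by
    refine (hgrad φ).trans ?_
    gcongr
    exact (weightedEnergy_gradWeight_sobolevWeight_le s φ).trans
      (mul_le_mul_of_nonneg_left hφ (sq_nonneg _))
  have habsorb : h ≤ δ * (2 * Y) + h / 2 + (1 + 1 / δ) ^ s * (Real.exp B ^ 2 * X) :=
    calc h ≤ _ := weightedEnergy_le_interpolation hs0 hδ (expSubOne φ)
      _ ≤ δ * (2 * (1 + M * h) * Y) + (1 + 1 / δ) ^ s * (Real.exp B ^ 2 * X) := by gcongr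
      _ = δ * (2 * Y) + δ * (4 * (M * Y)) * (h / 2)
          + (1 + 1 / δ) ^ s * (Real.exp B ^ 2 * X) := by ring
      _ ≤ _ := by
        gcongr
        exact mul_le_of_le_one_left (by positivity) hδY
  linarith

end ExpSubOneEnergy

section VectorCalculus

variable {V ι : Type*} [NormedAddCommGroup V] [InnerProductSpace ℝ V]
  [Fintype ι] (b : OrthonormalBasis ι ℝ V)

/-- The gradient of a scalar function, in components with respect to an orthonormal basis. -/
def schwartzGradient (p : 𝓢(V, ℂ)) (i : ι) : 𝓢(V, ℂ) := ∂_{b i} p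

/-- The divergence of a vector field given by its components in an orthonormal basis. -/
def divergence (v : ι → 𝓢(V, ℂ)) : 𝓢(V, ℂ) := ∑ i, ∂_{b i} (v i)

/-- The curl of a vector field, as the antisymmetric matrix field `∂ᵢvⱼ - ∂ⱼvᵢ`. -/
def curl (v : ι → 𝓢(V, ℂ)) (p : ι × ι) : 𝓢(V, ℂ) := ∂_{b p.1} (v p.2) - ∂_{b p.2} (v p.1)

lemma divergence_add (v w : ι → 𝓢(V, ℂ)) :
    divergence b (v + w) = divergence b v + divergence b w := by
  simp only [divergence, Pi.add_apply, lineDerivOp_add, Finset.sum_add_distrib]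

lemma lagrange_identity_real (a x : ι → ℝ) :
    (∑ i, a i ^ 2) * ∑ j, x j ^ 2 = (∑ i, a i * x i) ^ 2
      + 1 / 2 * ∑ p : ι × ι, (a p.1 * x p.2 - a p.2 * x p.1) ^ 2 := by
  have h (p : ι × ι) : (a p.1 * x p.2 - a p.2 * x p.1) ^ 2 = a p.1 ^ 2 * x p.2 ^ 2
      + x p.1 ^ 2 * a p.2 ^ 2 - 2 * ((a p.1 * x p.1) * (a p.2 * x p.2)) := by ring
  simp only [h, Fintype.sum_prod_type, Finset.sum_add_distrib, Finset.sum_sub_distrib,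
    ← Finset.mul_sum, ← Finset.sum_mul]
  ring

lemma lagrange_identity (a : ι → ℝ) (z : ι → ℂ) :
    (∑ i, a i ^ 2) * ∑ j, ‖z j‖ ^ 2 = ‖∑ i, (a i : ℂ) * z i‖ ^ 2
      + 1 / 2 * ∑ p : ι × ι, ‖(a p.1 : ℂ) * z p.2 - (a p.2 : ℂ) * z p.1‖ ^ 2 := by
  have hnorm (z : ℂ) : ‖z‖ ^ 2 = z.re ^ 2 + z.im ^ 2 := by
    rw [Complex.sq_norm, Complex.normSq_apply]
    ring
  simp only [hnorm, Complex.re_sum, Complex.im_sum, Complex.sub_re, Complex.sub_im,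
    Complex.re_ofReal_mul, Complex.im_ofReal_mul, Finset.sum_add_distrib]
  linarith [lagrange_identity_real a fun i => (z i).re, lagrange_identity_real a fun i => (z i).im]

lemma sq_norm_sum_mul_le (a : ι → ℝ) (z : ι → ℂ) :
    ‖∑ i, (a i : ℂ) * z i‖ ^ 2 ≤ (∑ i, a i ^ 2) * ∑ j, ‖z j‖ ^ 2 := by
  rw [lagrange_identity]
  exact le_add_of_nonneg_right (by positivity)

variable [FiniteDimensional ℝ V] [MeasurableSpace V] [BorelSpace V] {m : V → ℝ}

lemma schwartzMap_eq_of_fourier_eq {f g : 𝓢(V, ℂ)} (h : ∀ ξ, 𝓕 f ξ = 𝓕 g ξ) : f = g :=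
  (FourierTransform.fourierEquiv ℂ 𝓢(V, ℂ)).injective (SchwartzMap.ext h)

lemma fourier_divergence_apply (v : ι → 𝓢(V, ℂ)) (ξ : V) :
    𝓕 (divergence b v) ξ = 2 * π * Complex.I * ∑ i, (inner ℝ ξ (b i) : ℂ) * 𝓕 (v i) ξ := by
  simp only [divergence, FourierTransform.fourier_sum, sum_apply, fourier_lineDerivOp_apply,
    Finset.mul_sum]

lemma fourier_curl_apply (v : ι → 𝓢(V, ℂ)) (p : ι × ι) (ξ : V) :
    𝓕 (curl b v p) ξ = 2 * π * Complex.I *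
      ((inner ℝ ξ (b p.1) : ℂ) * 𝓕 (v p.2) ξ - (inner ℝ ξ (b p.2) : ℂ) * 𝓕 (v p.1) ξ) := by
  simp only [curl, sub_eq_add_neg, FourierTransform.fourier_add, FourierTransform.fourier_neg,
    add_apply, neg_apply, fourier_lineDerivOp_apply]
  ring

lemma curl_add_schwartzGradient (v : ι → 𝓢(V, ℂ)) (p : 𝓢(V, ℂ)) :
    curl b (v + schwartzGradient b p) = curl b v := by
  refine funext fun q => schwartzMap_eq_of_fourier_eq fun ξ => ?_
  simp only [fourier_curl_apply, Pi.add_apply, FourierTransform.fourier_add, add_apply,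
    schwartzGradient, fourier_lineDerivOp_apply]
  ring

/-- The Hodge identity `‖∇v‖² = ‖div v‖² + ½‖curl v‖²`, which is Lagrange's identity on the Fourier
side. -/
lemma totalEnergy_gradWeight (hm : IsTemperateWeight m) (v : ι → 𝓢(V, ℂ)) :
    totalEnergy (gradWeight m) v
      = weightedEnergy m (divergence b v) + 1 / 2 * totalEnergy m (curl b v) := by
  rw [totalEnergy_eq_integral hm.gradWeight, totalEnergy_eq_integral hm, weightedEnergy,
    ← integral_const_mul, ← integral_add (hm.integrable_mul_norm_sq _)
      ((hm.integrable_mul_sum_norm_sq _).const_mul _)]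
  congr 1 with ξ
  have h := lagrange_identity (fun i => inner ℝ ξ (b i)) fun j => 𝓕 (v j) ξ
  rw [b.sum_sq_inner_left] at h
  simp only [fourier_divergence_apply, fourier_curl_apply, sq_norm_two_pi_I_mul, gradWeight,
    ← Finset.mul_sum]
  linear_combination (2 * π) ^ 2 * m ξ * h

end VectorCalculus

section HodgePotential

variable {V ι : Type*} [NormedAddCommGroup V] {m : V → ℝ} {l : ℝ}

/-- The Fourier multiplier of the resolvent `(l - Δ)⁻¹` of the Laplacian. -/
def resolventMultiplier (l : ℝ) (ξ : V) : ℝ := (l + (2 * π * ‖ξ‖) ^ 2)⁻¹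

lemma resolventMultiplier_pos (hl : 0 < l) (ξ : V) : 0 < resolventMultiplier l ξ := by
  unfold resolventMultiplier
  positivity

lemma mul_resolventMultiplier_add (hl : 0 < l) (ξ : V) :
    l * resolventMultiplier l ξ + (2 * π * ‖ξ‖) ^ 2 * resolventMultiplier l ξ = 1 := by
  rw [← add_mul]
  exact mul_inv_cancel₀ (by positivity)

/-- Since `l q ≤ 1` and `(2π‖ξ‖)² q ≤ 1` for the multiplier `q`. -/
lemma sq_mul_resolventMultiplier_le (hl : 0 < l) (ξ : V) :
    (l * resolventMultiplier l ξ) ^ 2 * (2 * π * ‖ξ‖) ^ 2 ≤ l := by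
  have hq := (resolventMultiplier_pos hl ξ).le
  have hsum := mul_resolventMultiplier_add hl ξ
  have hlq : 0 ≤ l * resolventMultiplier l ξ := by positivity
  have hgq : 0 ≤ (2 * π * ‖ξ‖) ^ 2 * resolventMultiplier l ξ := by positivity
  calc (l * resolventMultiplier l ξ) ^ 2 * (2 * π * ‖ξ‖) ^ 2
      = l * ((l * resolventMultiplier l ξ) * ((2 * π * ‖ξ‖) ^ 2 * resolventMultiplier l ξ)) := by
        ring
    _ ≤ l * (1 * 1) := by gcongr <;> linarith
    _ = l := by ring

variable [InnerProductSpace ℝ V]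

lemma hasTemperateGrowth_resolventMultiplier (hl : 0 < l) :
    (resolventMultiplier l : V → ℝ).HasTemperateGrowth := by
  have hscale : (fun ξ : V => (2 * π / √l) • ξ).HasTemperateGrowth := by fun_prop
  have h : (resolventMultiplier l : V → ℝ)
      = (fun _ => l⁻¹) * ((fun ξ => (1 + ‖ξ‖ ^ 2) ^ (-1 : ℝ)) ∘ fun ξ : V => (2 * π / √l) • ξ) := by
    ext ξ
    simp only [resolventMultiplier, Pi.mul_apply, Function.comp, Real.rpow_neg_one, norm_smul,
      mul_pow, sq_abs, Real.norm_eq_abs, div_pow, Real.sq_sqrt hl.le, ← mul_inv]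
    congr 1
    field_simp
  rw [h]
  exact (Function.HasTemperateGrowth.const _).mul
    ((Function.hasTemperateGrowth_one_add_norm_sq_rpow V (-1)).comp hscale)

variable [FiniteDimensional ℝ V] [MeasurableSpace V] [BorelSpace V] [Fintype ι]
  (b : OrthonormalBasis ι ℝ V)

/-- The solution `p` of `l p - Δp = div f`, so that `f + ∇p` is the projection of `f` onto
divergence-free fields up to an error that vanishes as `l → 0`; the zeroth-order term keeps `p` in
the Schwartz class. -/
def hodgePotential (l : ℝ) (f : ι → 𝓢(V, ℂ)) : 𝓢(V, ℂ) :=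
  fourierMultiplierCLM ℂ (resolventMultiplier l) (divergence b f)

lemma fourier_hodgePotential_apply (hl : 0 < l) (f : ι → 𝓢(V, ℂ)) (ξ : V) :
    𝓕 (hodgePotential b l f) ξ = resolventMultiplier l ξ * 𝓕 (divergence b f) ξ := by
  rw [hodgePotential, fourierMultiplierCLM_apply, FourierTransform.fourier_fourierInv_eq,
    smulLeftCLM_apply_apply (hasTemperateGrowth_resolventMultiplier hl), Complex.real_smul]

lemma divergence_add_schwartzGradient_hodgePotential (hl : 0 < l) (f : ι → 𝓢(V, ℂ)) :
    divergence b (f + schwartzGradient b (hodgePotential b l f)) = l • hodgePotential b l f := by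
  refine schwartzMap_eq_of_fourier_eq fun ξ => ?_
  have hgrad : ∑ i, (inner ℝ ξ (b i) : ℂ) * (inner ℝ ξ (b i) : ℂ) = ‖ξ‖ ^ 2 := by
    exact_mod_cast (Finset.sum_congr rfl fun i _ => (sq _).symm).trans (b.sum_sq_inner_left ξ)
  have hmult :
      (l * resolventMultiplier l ξ + (2 * π * ‖ξ‖) ^ 2 * resolventMultiplier l ξ : ℂ) = 1 :=
    mod_cast mul_resolventMultiplier_add hl ξ
  rw [divergence_add, FourierTransform.fourier_add, add_apply, FourierTransform.fourier_smul,
    smul_apply, Complex.real_smul, fourier_divergence_apply b (schwartzGradient b _)]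
  simp only [schwartzGradient, fourier_lineDerivOp_apply, fourier_hodgePotential_apply b hl]
  have hsum (c : ℂ) : ∑ i, (inner ℝ ξ (b i) : ℂ) * (2 * π * Complex.I * ((inner ℝ ξ (b i) : ℂ) * c))
      = 2 * π * Complex.I * c * ‖ξ‖ ^ 2 := by
    rw [← hgrad, Finset.mul_sum]
    exact Finset.sum_congr rfl fun i _ => by ring
  rw [hsum]
  linear_combination (-𝓕 (divergence b f) ξ) * hmult
    + (2 * π * ‖ξ‖) ^ 2 * resolventMultiplier l ξ * 𝓕 (divergence b f) ξ * Complex.I_sq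

lemma sq_norm_fourier_smul_hodgePotential_le (hl : 0 < l) (f : ι → 𝓢(V, ℂ)) (ξ : V) :
    ‖𝓕 (l • hodgePotential b l f) ξ‖ ^ 2 ≤ l * ∑ j, ‖𝓕 (f j) ξ‖ ^ 2 := by
  have hcs := sq_norm_sum_mul_le (fun i => inner ℝ ξ (b i)) fun j => 𝓕 (f j) ξ
  rw [b.sum_sq_inner_left] at hcs
  have hle := sq_mul_resolventMultiplier_le hl ξ
  rw [FourierTransform.fourier_smul, smul_apply, fourier_hodgePotential_apply b hl, norm_smul,
    norm_mul, Complex.norm_real, fourier_divergence_apply, mul_pow, mul_pow, sq_norm_two_pi_I_mul,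
    Real.norm_eq_abs, Real.norm_eq_abs, sq_abs, sq_abs]
  calc l ^ 2 * (resolventMultiplier l ξ ^ 2
        * ((2 * π) ^ 2 * ‖∑ i, (inner ℝ ξ (b i) : ℂ) * 𝓕 (f i) ξ‖ ^ 2))
      ≤ l ^ 2 * (resolventMultiplier l ξ ^ 2
        * ((2 * π) ^ 2 * (‖ξ‖ ^ 2 * ∑ j, ‖𝓕 (f j) ξ‖ ^ 2))) := by gcongr
    _ = ((l * resolventMultiplier l ξ) ^ 2 * (2 * π * ‖ξ‖) ^ 2) * ∑ j, ‖𝓕 (f j) ξ‖ ^ 2 := by ring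
    _ ≤ l * ∑ j, ‖𝓕 (f j) ξ‖ ^ 2 := by gcongr

lemma weightedEnergy_smul_hodgePotential_le (hm : IsTemperateWeight m) (hl : 0 < l)
    (f : ι → 𝓢(V, ℂ)) :
    weightedEnergy m (l • hodgePotential b l f) ≤ l * totalEnergy m f := by
  rw [totalEnergy_eq_integral hm, weightedEnergy, ← integral_const_mul]
  refine integral_mono (hm.integrable_mul_norm_sq _)
    ((hm.integrable_mul_sum_norm_sq _).const_mul l) fun ξ => ?_
  exact (mul_le_mul_of_nonneg_left (sq_norm_fourier_smul_hodgePotential_le b hl f ξ)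
    (hm.nonneg ξ)).trans_eq (mul_left_comm _ _ _)

lemma integrable_inner_schwartzMap (f g : 𝓢(V, ℂ)) : Integrable fun x => inner ℝ (f x) (g x) :=
  (pairing (innerSL ℝ) f g).integrable

lemma sum_integral_inner_schwartzGradient (g : ι → 𝓢(V, ℂ)) (p : 𝓢(V, ℂ)) :
    ∑ j, ∫ x, inner ℝ (g j x) (schwartzGradient b p j x)
      = -∫ x, inner ℝ (divergence b g x) (p x) := by
  have hparts (j : ι) : ∫ x, inner ℝ (g j x) (schwartzGradient b p j x)
      = -∫ x, inner ℝ (∂_{b j} (g j) x) (p x) :=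
    integral_bilinear_lineDerivOp_right_eq_neg_left (g j) p (innerSL ℝ) (b j)
  simp only [hparts, divergence, sum_apply, sum_inner, Finset.sum_neg_distrib]
  rw [integral_finsetSum _ fun j _ => integrable_inner_schwartzMap _ _]

lemma sum_integral_inner_schwartzGradient_hodgePotential_nonpos (hl : 0 < l) (f : ι → 𝓢(V, ℂ)) :
    ∑ j, ∫ x, inner ℝ ((f + schwartzGradient b (hodgePotential b l f)) j x)
      (schwartzGradient b (hodgePotential b l f) j x) ≤ 0 := by
  rw [sum_integral_inner_schwartzGradient, divergence_add_schwartzGradient_hodgePotential b hl,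
    neg_nonpos]
  refine integral_nonneg fun x => ?_
  rw [smul_apply, real_inner_smul_left, real_inner_self_eq_norm_sq]
  positivity

end HodgePotential

section CurlEstimate

variable {V ι : Type*} [NormedAddCommGroup V] [InnerProductSpace ℝ V] [Fintype ι]
  (b : OrthonormalBasis ι ℝ V)

/-- The commutator `∇φ ∧ v` of the curl with the multiplication by `e^φ`, up to a factor `e^φ`. -/
def gradientWedge (φ : 𝓢(V, ℂ)) (v : ι → 𝓢(V, ℂ)) (p : ι × ι) : 𝓢(V, ℂ) :=
  schwartzMul (∂_{b p.1} φ) (v p.2) - schwartzMul (∂_{b p.2} φ) (v p.1)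

lemma curl_expMul (φ : 𝓢(V, ℂ)) (v : ι → 𝓢(V, ℂ)) (p : ι × ι) :
    curl b (fun j => expMul φ (v j)) p = expMul φ (curl b v p + gradientWedge b φ v p) := by
  ext x
  simp only [curl, gradientWedge, lineDerivOp_expMul, expMul_apply, add_apply, sub_apply]
  ring

lemma curl_eq_expMul_neg_sub (φ : 𝓢(V, ℂ)) (v : ι → 𝓢(V, ℂ)) :
    curl b v
      = (fun p => expMul (-φ) (curl b (fun j => expMul φ (v j)) p)) - gradientWedge b φ v := by
  funext p
  rw [Pi.sub_apply, curl_expMul, expMul_neg_expMul, add_sub_cancel_right]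

variable [FiniteDimensional ℝ V] [MeasurableSpace V] [BorelSpace V] {s : ℝ}

lemma exists_totalEnergy_gradientWedge_le (hV : 3 ≤ Module.finrank ℝ V)
    (hs : (Module.finrank ℝ V : ℝ) / 2 < s) :
    ∃ M, 0 ≤ M ∧ ∀ (φ : 𝓢(V, ℂ)) (v : ι → 𝓢(V, ℂ)),
      totalEnergy (sobolevWeight s) (gradientWedge b φ v)
        ≤ M * (weightedEnergy (gradWeight (sobolevWeight s)) φ
          * totalEnergy (gradWeight (sobolevWeight (s - 1))) v) := by
  obtain ⟨M, hM, hmul⟩ := exists_gradWeight_schwartzMul_le (V := V) hV hs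
  have hW := isTemperateWeight_sobolevWeight (V := V) s
  refine ⟨4 * M, by positivity, fun φ v => ?_⟩
  have hentry (p : ι × ι) : weightedEnergy (sobolevWeight s) (gradientWedge b φ v p)
      ≤ 2 * (M * (weightedEnergy (sobolevWeight s) (∂_{b p.1} φ)
          * weightedEnergy (gradWeight (sobolevWeight (s - 1))) (v p.2))
        + M * (weightedEnergy (gradWeight (sobolevWeight (s - 1))) (v p.1)
          * weightedEnergy (sobolevWeight s) (∂_{b p.2} φ))) := by
    refine (weightedEnergy_sub_le hW _ _).trans ?_
    linarith [hmul (∂_{b p.1} φ) (v p.2), hmul (∂_{b p.2} φ) (v p.1)]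
  refine (Finset.sum_le_sum fun p _ => hentry p).trans_eq ?_
  rw [← totalEnergy_lineDerivOp hW b]
  simp only [totalEnergy, Fintype.sum_prod_type, Finset.sum_add_distrib, ← Finset.mul_sum,
    ← Finset.sum_mul]
  ring

/-- The square of the right-hand side `‖div v‖ + ‖curl (e^φ v)‖` of the estimate, up to a factor
`2`. -/
def divCurlEnergy (s : ℝ) (φ : 𝓢(V, ℂ)) (v : ι → 𝓢(V, ℂ)) : ℝ :=
  weightedEnergy (sobolevWeight s) (divergence b v)
    + totalEnergy (sobolevWeight s) (curl b fun j => expMul φ (v j))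

lemma exists_totalEnergy_gradWeight_le_add (hV : 3 ≤ Module.finrank ℝ V)
    (hs : (Module.finrank ℝ V : ℝ) / 2 < s) {X : ℝ} (hX : 0 ≤ X) :
    ∃ c₁ c₂, 0 ≤ c₁ ∧ 0 ≤ c₂ ∧ ∀ (φ : 𝓢(V, ℂ)) (v : ι → 𝓢(V, ℂ)),
      weightedEnergy (sobolevWeight (s + 1)) φ ≤ X →
      totalEnergy (gradWeight (sobolevWeight s)) v ≤ c₁ * divCurlEnergy b s φ v
        + c₂ * totalEnergy (gradWeight (sobolevWeight (s - 1))) v := by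
  obtain ⟨c, hc0, hc⟩ := exists_weightedEnergy_expSubOne_le (V := V) hs hX
  obtain ⟨M, hM, hexp⟩ := exists_weightedEnergy_expMul_le (V := V) hs
  obtain ⟨N, hN, hwedge⟩ := exists_totalEnergy_gradientWedge_le b hV hs
  have hW := isTemperateWeight_sobolevWeight (V := V) s
  refine ⟨1 + 2 * (1 + M * c), N * ((2 * π) ^ 2 * X), by positivity, by positivity,
    fun φ v hφ => ?_⟩
  set w := curl b fun j => expMul φ (v j)
  have hZ : 0 ≤ totalEnergy (gradWeight (sobolevWeight (s - 1))) v :=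
    totalEnergy_nonneg (isTemperateWeight_sobolevWeight _).gradWeight v
  have hmain : totalEnergy (sobolevWeight s) (fun p => expMul (-φ) (w p))
      ≤ 2 * (1 + M * c) * totalEnergy (sobolevWeight s) w := by
    rw [totalEnergy, totalEnergy, Finset.mul_sum]
    refine Finset.sum_le_sum fun p _ => (hexp (-φ) (w p)).trans ?_
    gcongr
    · exact weightedEnergy_nonneg hW _
    · exact hc (-φ) (by rwa [weightedEnergy_neg])
  have hcomm : totalEnergy (sobolevWeight s) (gradientWedge b φ v)
      ≤ N * ((2 * π) ^ 2 * X) * totalEnergy (gradWeight (sobolevWeight (s - 1))) v := by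
    refine (hwedge φ v).trans ?_
    rw [mul_assoc]
    gcongr
    exact (weightedEnergy_gradWeight_sobolevWeight_le s φ).trans (by gcongr)
  have hcurl := totalEnergy_sub_le hW (fun p => expMul (-φ) (w p)) (gradientWedge b φ v)
  rw [← curl_eq_expMul_neg_sub] at hcurl
  have hdiv := weightedEnergy_nonneg hW (divergence b v)
  have hw := totalEnergy_nonneg hW w
  rw [totalEnergy_gradWeight b hW, divCurlEnergy]
  have hrest : 0 ≤ 2 * (1 + M * c) * weightedEnergy (sobolevWeight s) (divergence b v) := by
    positivity
  linarith

end CurlEstimate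

section Absorption

variable {V ι : Type*} [NormedAddCommGroup V] [InnerProductSpace ℝ V] [FiniteDimensional ℝ V]
  [MeasurableSpace V] [BorelSpace V] [Fintype ι]

lemma sq_mul_sq_norm_le_of_smul_eq_add {E : Type*} [NormedAddCommGroup E] [InnerProductSpace ℝ E]
    {a c : ℝ} {g h k : E} (hc : 0 < c) (hca : c ≤ a) (hg : a • g = h + k) :
    c ^ 2 * ‖g‖ ^ 2 ≤ ‖k‖ ^ 2 + 2 * c * inner ℝ g h := by
  have hinner : a * ‖g‖ ^ 2 = inner ℝ g h + inner ℝ g k := by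
    rw [← real_inner_self_eq_norm_sq, ← real_inner_smul_right, hg, inner_add_right]
  have hle : c * ‖g‖ ^ 2 ≤ inner ℝ g h + ‖g‖ * ‖k‖ :=
    calc c * ‖g‖ ^ 2 ≤ a * ‖g‖ ^ 2 := by gcongr
      _ ≤ inner ℝ g h + ‖g‖ * ‖k‖ := hinner.trans_le (by gcongr; exact real_inner_le_norm g k)
  linarith [mul_le_mul_of_nonneg_left hle (by positivity : 0 ≤ 2 * c),
    two_mul_le_add_sq (c * ‖g‖) ‖k‖]

lemma sq_mul_totalEnergy_zero_le_of_smul_eq_add {a : V → ℝ} {c : ℝ} {g h k : ι → 𝓢(V, ℂ)}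
    (hc : 0 < c) (hca : ∀ x, c ≤ a x) (hg : ∀ j x, a x • g j x = h j x + k j x)
    (hgh : ∑ j, ∫ x, inner ℝ (g j x) (h j x) ≤ 0) :
    c ^ 2 * totalEnergy (sobolevWeight 0) g ≤ totalEnergy (sobolevWeight 0) k := by
  have hcomponent (j : ι) : c ^ 2 * ∫ x, ‖g j x‖ ^ 2
      ≤ (∫ x, ‖k j x‖ ^ 2) + 2 * c * ∫ x, inner ℝ (g j x) (h j x) := by
    have hk := integrable_norm_sq (k j)
    have hinner := (integrable_inner_schwartzMap (g j) (h j)).const_mul (2 * c)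
    rw [← integral_const_mul, ← integral_const_mul, ← integral_add hk hinner]
    exact integral_mono ((integrable_norm_sq (g j)).const_mul _) (hk.add hinner)
      fun x => sq_mul_sq_norm_le_of_smul_eq_add hc (hca x) (hg j x)
  have hsum := Finset.sum_le_sum fun j (_ : j ∈ Finset.univ) => hcomponent j
  rw [Finset.sum_add_distrib, ← Finset.mul_sum, ← Finset.mul_sum] at hsum
  simp only [totalEnergy, weightedEnergy_sobolevWeight_zero]
  linarith [mul_nonpos_of_nonneg_of_nonpos (by positivity : 0 ≤ 2 * c) hgh]

variable (b : OrthonormalBasis ι ℝ V) {s l : ℝ}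

/-- A field whose curl is that of `e^φ v` and whose divergence is that of `v` up to an error that
vanishes as `l → 0`. It is compared with `v` in order to bound the lower-order terms of `v`. -/
def hodgeField (l : ℝ) (φ : 𝓢(V, ℂ)) (v : ι → 𝓢(V, ℂ)) : ι → 𝓢(V, ℂ) :=
  (fun j => expMul φ (v j))
    + schwartzGradient b (hodgePotential b l ((fun j => expMul φ (v j)) - v))

lemma hodgeField_sub (l : ℝ) (φ : 𝓢(V, ℂ)) (v : ι → 𝓢(V, ℂ)) :
    hodgeField b l φ v - v = ((fun j => expMul φ (v j)) - v)
      + schwartzGradient b (hodgePotential b l ((fun j => expMul φ (v j)) - v)) :=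
  add_sub_right_comm _ _ _

lemma divergence_hodgeField (hl : 0 < l) (φ : 𝓢(V, ℂ)) (v : ι → 𝓢(V, ℂ)) :
    divergence b (hodgeField b l φ v)
      = divergence b v + l • hodgePotential b l ((fun j => expMul φ (v j)) - v) := by
  rw [← divergence_add_schwartzGradient_hodgePotential b hl, ← hodgeField_sub, ← divergence_add,
    add_sub_cancel]

lemma totalEnergy_gradWeight_hodgeField_le (hl : 0 < l) (φ : 𝓢(V, ℂ)) (v : ι → 𝓢(V, ℂ)) :
    totalEnergy (gradWeight (sobolevWeight s)) (hodgeField b l φ v)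
      ≤ 2 * (divCurlEnergy b s φ v
        + l * totalEnergy (sobolevWeight s) ((fun j => expMul φ (v j)) - v)) := by
  have hW := isTemperateWeight_sobolevWeight (V := V) s
  set f := (fun j => expMul φ (v j)) - v with hf
  have hcurl : curl b (hodgeField b l φ v) = curl b fun j => expMul φ (v j) :=
    curl_add_schwartzGradient b _ _
  rw [totalEnergy_gradWeight b hW, hcurl, divergence_hodgeField b hl, divCurlEnergy, ← hf]
  linarith [weightedEnergy_add_le hW (divergence b v) (l • hodgePotential b l f),
    weightedEnergy_smul_hodgePotential_le b hW hl f,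
    totalEnergy_nonneg hW (curl b fun j => expMul φ (v j))]

/-- A real Schwartz function regarded as a complex one. -/
def schwartzOfReal {W : Type*} [NormedAddCommGroup W] [NormedSpace ℝ W] (ψ : 𝓢(W, ℝ)) : 𝓢(W, ℂ) :=
  ψ.postcompCLM Complex.ofRealCLM

/-- Here `e^ψ` has to be positive, so `ψ` is real: `e^ψ (u - v) = ∇p + (e^ψ - 1) u` for
`u = hodgeField b l ψ v`, where `∇p` is almost orthogonal to `u - v`. -/
lemma sq_exp_neg_mul_totalEnergy_hodgeField_sub_le (hl : 0 < l) {ψ : 𝓢(V, ℝ)} {B : ℝ}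
    (hψ : ∀ x, |ψ x| ≤ B) (v : ι → 𝓢(V, ℂ)) :
    Real.exp (-B) ^ 2 * totalEnergy (sobolevWeight 0)
        (hodgeField b l (schwartzOfReal ψ) v - v)
      ≤ totalEnergy (sobolevWeight 0) fun j =>
        schwartzMul (expSubOne (schwartzOfReal ψ))
          (hodgeField b l (schwartzOfReal ψ) v j) := by
  set φ := schwartzOfReal ψ
  refine sq_mul_totalEnergy_zero_le_of_smul_eq_add (a := fun x => Real.exp (ψ x))
    (h := schwartzGradient b (hodgePotential b l ((fun j => expMul φ (v j)) - v)))
    (Real.exp_pos _) (fun x => Real.exp_le_exp.2 (neg_le_of_abs_le (hψ x))) (fun j x => ?_) ?_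
  · have hφ : (Real.exp (ψ x) : ℂ) = Complex.exp (φ x) := Complex.ofReal_exp _
    simp only [hodgeField, Pi.sub_apply, Pi.add_apply, sub_apply, add_apply, schwartzMul_apply,
      expSubOne_apply, expMul_apply, Complex.real_smul, hφ]
    ring
  · rw [hodgeField_sub]
    exact sum_integral_inner_schwartzGradient_hodgePotential_nonpos b hl _

lemma exists_totalEnergy_hodgeField_sub_le (hV : 3 ≤ Module.finrank ℝ V)
    (hs : (Module.finrank ℝ V : ℝ) / 2 < s) {X : ℝ} (hX : 0 ≤ X) :
    ∃ q, 0 ≤ q ∧ ∀ (ψ : 𝓢(V, ℝ)) (v : ι → 𝓢(V, ℂ)) (l : ℝ), 0 < l →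
      weightedEnergy (sobolevWeight (s + 1)) (schwartzOfReal ψ) ≤ X →
      totalEnergy (sobolevWeight 0) (hodgeField b l (schwartzOfReal ψ) v - v)
        ≤ q * totalEnergy (gradWeight (sobolevWeight s))
          (hodgeField b l (schwartzOfReal ψ) v) := by
  obtain ⟨B, hB⟩ := exists_norm_apply_le (V := V) hs X
  obtain ⟨c, hc0, hc⟩ := exists_weightedEnergy_expSubOne_le (V := V) hs hX
  obtain ⟨M, hM, hmul⟩ := exists_gradWeight_schwartzMul_le (V := V) hV hs
  have hs0 : 0 ≤ s := (by positivity : (0 : ℝ) ≤ Module.finrank ℝ V / 2).trans hs.le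
  have hW (t : ℝ) := isTemperateWeight_sobolevWeight (V := V) t
  refine ⟨M * c / Real.exp (-B) ^ 2, by positivity, fun ψ v l hl hψX => ?_⟩
  set φ := schwartzOfReal ψ
  set u := hodgeField b l φ v
  have hφX : weightedEnergy (sobolevWeight s) φ ≤ X :=
    (weightedEnergy_sobolevWeight_mono (le_add_of_nonneg_right zero_le_one) φ).trans hψX
  have hψ (x : V) : |ψ x| ≤ B := (Complex.norm_real (ψ x)).symm.trans_le (hB φ hφX x)
  rw [div_mul_eq_mul_div, le_div_iff₀' (by positivity)]
  calc Real.exp (-B) ^ 2 * totalEnergy (sobolevWeight 0) (u - v)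
      ≤ totalEnergy (sobolevWeight 0) fun j => schwartzMul (expSubOne φ) (u j) :=
        sq_exp_neg_mul_totalEnergy_hodgeField_sub_le b hl hψ v
    _ ≤ totalEnergy (sobolevWeight s) fun j => schwartzMul (expSubOne φ) (u j) :=
        totalEnergy_mono (hW 0) (hW s) (sobolevWeight_mono hs0) _
    _ ≤ M * (weightedEnergy (sobolevWeight s) (expSubOne φ)
          * totalEnergy (gradWeight (sobolevWeight (s - 1))) u) := by
        simp only [totalEnergy, Finset.mul_sum]
        exact Finset.sum_le_sum fun j _ => hmul _ _
    _ ≤ M * (c * totalEnergy (gradWeight (sobolevWeight s)) u) := by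
        gcongr
        · exact totalEnergy_nonneg (hW _).gradWeight _
        · exact hc φ hψX
        · exact totalEnergy_mono (hW _).gradWeight (hW s).gradWeight
            (gradWeight_mono (sobolevWeight_mono (sub_le_self s zero_le_one))) _
    _ = M * c * totalEnergy (gradWeight (sobolevWeight s)) u := (mul_assoc _ _ _).symm

lemma exists_totalEnergy_gradWeight_sub_one_le (hs : 0 ≤ s) {η : ℝ} (hη : 0 < η) {q : ℝ}
    (hq : 0 ≤ q) :
    ∃ K, 0 ≤ K ∧ ∀ u v : ι → 𝓢(V, ℂ),
      totalEnergy (sobolevWeight 0) (u - v) ≤ q * totalEnergy (gradWeight (sobolevWeight s)) u →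
      totalEnergy (gradWeight (sobolevWeight (s - 1))) v
        ≤ η * totalEnergy (gradWeight (sobolevWeight s)) v
          + K * totalEnergy (gradWeight (sobolevWeight s)) u := by
  set δ := η / (4 * (2 * π) ^ 2) with hδ
  have hδ0 : 0 < δ := by positivity
  set D := (1 + 1 / δ) ^ s
  have : 0 ≤ D := by positivity
  refine ⟨2 + η + 2 * (2 * π) ^ 2 * D * q, by positivity, fun u v huv => ?_⟩
  have hG (t : ℝ) := (isTemperateWeight_sobolevWeight (V := V) t).gradWeight
  set Gu := totalEnergy (gradWeight (sobolevWeight s)) u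
  set Gv := totalEnergy (gradWeight (sobolevWeight s)) v
  have hlow : totalEnergy (gradWeight (sobolevWeight (s - 1))) u ≤ Gu :=
    totalEnergy_mono (hG _) (hG s)
      (gradWeight_mono (sobolevWeight_mono (sub_le_self s zero_le_one))) u
  have hdiff : totalEnergy (gradWeight (sobolevWeight (s - 1))) (u - v)
      ≤ (2 * π) ^ 2 * totalEnergy (sobolevWeight s) (u - v) := by
    simp only [totalEnergy, Finset.mul_sum]
    refine Finset.sum_le_sum fun j _ => ?_
    simpa only [sub_add_cancel] using weightedEnergy_gradWeight_sobolevWeight_le (s - 1) ((u - v) j)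
  calc totalEnergy (gradWeight (sobolevWeight (s - 1))) v
      = totalEnergy (gradWeight (sobolevWeight (s - 1))) (u - (u - v)) := by rw [sub_sub_cancel]
    _ ≤ 2 * (totalEnergy (gradWeight (sobolevWeight (s - 1))) u
          + totalEnergy (gradWeight (sobolevWeight (s - 1))) (u - v)) :=
        totalEnergy_sub_le (hG _) _ _
    _ ≤ 2 * (Gu + (2 * π) ^ 2 * (δ * (2 * (Gu + Gv)) + D * (q * Gu))) := by
        gcongr
        refine hdiff.trans ?_
        gcongr
        refine (totalEnergy_le_interpolation hs hδ0 _).trans ?_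
        gcongr
        exact totalEnergy_sub_le (hG s) u v
    _ = η * Gv + (2 + η + 2 * (2 * π) ^ 2 * D * q) * Gu := by
        rw [hδ]
        field_simp
        ring

theorem exists_totalEnergy_gradWeight_le (hV : 3 ≤ Module.finrank ℝ V)
    (hs : (Module.finrank ℝ V : ℝ) / 2 < s) {X : ℝ} (hX : 0 ≤ X) :
    ∃ K, 0 ≤ K ∧ ∀ (ψ : 𝓢(V, ℝ)) (v : ι → 𝓢(V, ℂ)),
      weightedEnergy (sobolevWeight (s + 1)) (schwartzOfReal ψ) ≤ X →
      totalEnergy (gradWeight (sobolevWeight s)) v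
        ≤ K * divCurlEnergy b s (schwartzOfReal ψ) v := by
  obtain ⟨c₁, c₂, hc₁, hc₂, hmain⟩ := exists_totalEnergy_gradWeight_le_add b hV hs hX
  obtain ⟨q, hq, hclose⟩ := exists_totalEnergy_hodgeField_sub_le b hV hs hX
  have hs0 : 0 ≤ s := (by positivity : (0 : ℝ) ≤ Module.finrank ℝ V / 2).trans hs.le
  set η := 1 / (2 * (c₂ + 1)) with hη
  have hη0 : 0 < η := by positivity
  have hηc : c₂ * η ≤ 1 / 2 := by
    rw [hη, mul_one_div, div_le_iff₀ (by positivity)]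
    linarith
  obtain ⟨K, hK, habsorb⟩ := exists_totalEnergy_gradWeight_sub_one_le (V := V) (ι := ι) hs0 hη0 hq
  refine ⟨2 * c₁ + 4 * (c₂ * K), by positivity, fun ψ v hψ => ?_⟩
  set φ := schwartzOfReal ψ
  set R := divCurlEnergy b s φ v
  set G := totalEnergy (gradWeight (sobolevWeight s)) v
  set T := totalEnergy (sobolevWeight s) ((fun j => expMul φ (v j)) - v)
  have hG : 0 ≤ G := totalEnergy_nonneg (isTemperateWeight_sobolevWeight s).gradWeight v
  have happrox (l : ℝ) (hl : 0 < l) : G ≤ 2 * c₁ * R + 4 * (c₂ * K) * (R + l * T) := by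
    have hlow : c₂ * totalEnergy (gradWeight (sobolevWeight (s - 1))) v
        ≤ c₂ * η * G + c₂ * K * (2 * (R + l * T)) := by
      rw [mul_assoc, mul_assoc, ← mul_add]
      gcongr
      refine (habsorb _ v (hclose ψ v l hl hψ)).trans ?_
      gcongr
      exact totalEnergy_gradWeight_hodgeField_le b hl φ v
    linarith [hmain φ v hψ, mul_le_mul_of_nonneg_right hηc hG]
  have hlim : Filter.Tendsto (fun l => 2 * c₁ * R + 4 * (c₂ * K) * (R + l * T))
      (nhdsWithin 0 (Set.Ioi 0)) (nhds (2 * c₁ * R + 4 * (c₂ * K) * (R + 0 * T))) :=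
    (Continuous.tendsto (by fun_prop) 0).mono_left nhdsWithin_le_nhds
  have hle := ge_of_tendsto hlim (eventually_mem_nhdsWithin.mono happrox)
  linarith

end Absorption

lemma sqrt_add_le_add_sqrt {x y : ℝ} (hx : 0 ≤ x) (hy : 0 ≤ y) : √(x + y) ≤ √x + √y := by
  simpa only [Real.sqrt_eq_rpow] using
    Real.rpow_add_le_add_rpow hx hy one_half_pos.le one_half_lt_one.le

section EuclideanCoordinates

variable {d : ℕ}

lemma hNormSq_coe (s : ℝ) (u : 𝓢(Euc d, ℂ)) :
    hNormSq d s u = weightedEnergy (sobolevWeight s) u := by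
  simp only [hNormSq, weightedEnergy, sobolevWeight, fourier_coe]

lemma hNorm_coe_sq (s : ℝ) (u : 𝓢(Euc d, ℂ)) :
    hNorm d s u ^ 2 = weightedEnergy (sobolevWeight s) u := by
  rw [hNorm, hNormSq_coe,
    Real.sq_sqrt (weightedEnergy_nonneg (isTemperateWeight_sobolevWeight s) u)]

lemma pd_coe (i : Fin d) (u : 𝓢(Euc d, ℂ)) :
    pd d i u = ∂_{EuclideanSpace.basisFun (Fin d) ℝ i} u := by
  funext x
  rw [pd, lineDerivOp_apply_eq_fderiv, EuclideanSpace.basisFun_apply]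

lemma exp_mul_coe (φ : 𝓢(Euc d, ℝ)) (v : 𝓢(Euc d, ℂ)) :
    (fun y => Complex.exp (φ y) * v y) = expMul (schwartzOfReal φ) v :=
  funext fun y => (expMul_apply (schwartzOfReal φ) v y).symm

lemma sum_pd_coe (v : Fin d → 𝓢(Euc d, ℂ)) :
    (fun x => ∑ i, pd d i (v i) x) = divergence (EuclideanSpace.basisFun (Fin d) ℝ) v := by
  funext x
  simp only [pd_coe, divergence, sum_apply]

lemma pd_sub_pd_coe (v : Fin d → 𝓢(Euc d, ℂ)) (i j : Fin d) :
    (fun x => pd d i (v j) x - pd d j (v i) x)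
      = curl (EuclideanSpace.basisFun (Fin d) ℝ) v (i, j) := by
  funext x
  simp only [pd_coe, curl, sub_apply]

lemma sum_hNormSq_pd (s : ℝ) (v : Fin d → 𝓢(Euc d, ℂ)) :
    ∑ i, ∑ j, hNormSq d s (pd d i (v j)) = totalEnergy (gradWeight (sobolevWeight s)) v := by
  simp only [pd_coe, hNormSq_coe]
  rw [Finset.sum_comm]
  exact Finset.sum_congr rfl fun j _ =>
    totalEnergy_lineDerivOp (isTemperateWeight_sobolevWeight s) _ (v j)

lemma sum_hNormSq_pd_exp_mul_sub (s : ℝ) (φ : 𝓢(Euc d, ℝ)) (v : Fin d → 𝓢(Euc d, ℂ)) :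
    ∑ i, ∑ j, hNormSq d s (fun x => pd d i (fun y => Complex.exp (φ y) * v j y) x
        - pd d j (fun y => Complex.exp (φ y) * v i y) x)
      = totalEnergy (sobolevWeight s) (curl (EuclideanSpace.basisFun (Fin d) ℝ)
          fun j => expMul (schwartzOfReal φ) (v j)) := by
  simp only [exp_mul_coe]
  rw [totalEnergy, Fintype.sum_prod_type]
  refine Finset.sum_congr rfl fun i _ => Finset.sum_congr rfl fun j _ => ?_
  rw [pd_sub_pd_coe fun j => expMul (schwartzOfReal φ) (v j), hNormSq_coe]

end EuclideanCoordinates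

theorem statement8_general (d : ℕ) (s : ℝ) (hd : d = 1 ∨ 3 ≤ d) (hs : (d : ℝ) / 2 < s) :
    ∃ C : ℝ → ℝ, ∀ (φ : 𝓢(Euc d, ℝ)) (v : Fin d → 𝓢(Euc d, ℂ)),
      Real.sqrt (∑ i, ∑ j, hNormSq d s (pd d i (v j)))
        ≤ C (hNorm d (s + 1) (fun x => (φ x : ℂ))) *
          (hNorm d s (fun x => ∑ i, pd d i (v i) x)
            + Real.sqrt (∑ i, ∑ j, hNormSq d s
                (fun x => pd d i (fun y => Complex.exp (φ y) * v j y) x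
                  - pd d j (fun y => Complex.exp (φ y) * v i y) x))) := by
  rcases hd with rfl | hd
  · refine ⟨fun _ => 1, fun φ v => ?_⟩
    simp only [Fin.sum_univ_one, one_mul, hNorm, Fin.isValue]
    exact le_add_of_nonneg_right (Real.sqrt_nonneg _)
  rw [← finrank_euclideanSpace_fin (𝕜 := ℝ) (n := d)] at hd hs
  let b := EuclideanSpace.basisFun (Fin d) ℝ
  choose K hK hmain using fun r : ℝ => exists_totalEnergy_gradWeight_le b hd hs (sq_nonneg r)
  refine ⟨fun r => √(K r), fun φ v => ?_⟩
  set r := hNorm d (s + 1) (fun x => (φ x : ℂ))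
  rw [sum_hNormSq_pd, sum_pd_coe, hNorm, hNormSq_coe, sum_hNormSq_pd_exp_mul_sub]
  calc √(totalEnergy (gradWeight (sobolevWeight s)) v)
      ≤ √(K r * divCurlEnergy b s (schwartzOfReal φ) v) :=
        Real.sqrt_le_sqrt (hmain r φ v (hNorm_coe_sq (s + 1) (schwartzOfReal φ)).ge)
    _ = √(K r) * √(divCurlEnergy b s (schwartzOfReal φ) v) := Real.sqrt_mul (hK r) _
    _ ≤ _ := by
      gcongr
      exact sqrt_add_le_add_sqrt
        (weightedEnergy_nonneg (isTemperateWeight_sobolevWeight s) _)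
        (totalEnergy_nonneg (isTemperateWeight_sobolevWeight s) _)

/-- Corollary 2.8: `‖∇v‖_{H^s} ≤ 𝒞(‖φ‖_{H^{s+1}})(‖div v‖_{H^s} + ‖curl(e^φ v)‖_{H^s})`
for `d = 1` or `d ≥ 3`. -/
theorem statement8 (d s : ℕ) (hd : d = 1 ∨ 3 ≤ d) (hs : (d : ℝ) / 2 < s) :
    ∃ C : ℝ → ℝ, ∀ (φ : 𝓢(Euc d, ℝ)) (v : Fin d → 𝓢(Euc d, ℂ)),
      Real.sqrt (∑ i, ∑ j, hNormSq d s (pd d i (v j)))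
        ≤ C (hNorm d ((s : ℝ) + 1) (fun x => (φ x : ℂ))) *
          (hNorm d s (fun x => ∑ i, pd d i (v i) x)
            + Real.sqrt (∑ i, ∑ j, hNormSq d s
                (fun x => pd d i (fun y => Complex.exp (φ y) * v j y) x
                  - pd d j (fun y => Complex.exp (φ y) * v i y) x))) :=
  statement8_general d s hd hs
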